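/- Let B be a triangulated d-ball with m d-faces and let F_1,…,F_{m−1} be a shelling down of B (so that B shells down to the subcomplex generated by its single remaining d-face F_m). Then for every i∈{1,…,m−1}, the d-face F_i is free for shelling in the complex B_{F_i} := B[F_i,F_{i+1},…,F_m]; that is, the subcomplex of faces of F_i contained in ∂(B_{F_i}) has polyhedron homeomorphic to a closed (d−1)-dimensional ball, where ∂(B_{F_i}) denotes the subcomplex generated by the (d−1)-faces of B_{F_i} contained in exactly one d-face of B_{F_i}. -/

import Mathlib

/-!
STATEMENT 4: If B is a triangulated d-ball with m d-faces and F_1,…,F_{m−1} is a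
shelling down of B (to its single remaining d-face), then every F_i is free for
shelling in B_{F_i} = B[F_i,…,F_m].
-/

open scoped Classical

namespace PaperFormal

variable {V : Type*}

/-- A facet is an inclusion-maximal face. -/
def IsFacet (K : Set (Finset V)) (σ : Finset V) : Prop :=
  σ ∈ K ∧ ∀ τ ∈ K, σ ⊆ τ → σ = τ

/-- `K` is pure of dimension `d`. -/
def PureDim (K : Set (Finset V)) (d : ℕ) : Prop :=
  K.Nonempty ∧ ∀ σ, IsFacet K σ → σ.card = d + 1

/-- `K[θ_1,…,θ_m]` for the list `l = [θ_1,…,θ_m]`. -/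
def generatedByL (K : Set (Finset V)) (l : List (Finset V)) : Set (Finset V) :=
  {τ ∈ K | ∃ θ ∈ l, τ ⊆ θ}

/-- The subcomplex of `K` generated by the faces in `S`. -/
def generatedBy (K S : Set (Finset V)) : Set (Finset V) :=
  {τ ∈ K | ∃ θ ∈ S, τ ⊆ θ}

/-- The shelling-down condition for the first `k` entries of `l`. -/
def DownSteps (K : Set (Finset V)) (d : ℕ) (l : List (Finset V)) (k : ℕ) : Prop :=
  ∀ i, i < k →
    PureDim (generatedByL K [l.getD i ∅] ∩ generatedByL K (l.drop (i + 1))) (d - 1)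

/-- The first `k` entries of `l` (which enumerates all facets of `K`) form a
shelling down of `K`. -/
def IsShellingDown (K : Set (Finset V)) (d : ℕ) (l : List (Finset V)) (k : ℕ) : Prop :=
  l.Nodup ∧ (∀ σ, σ ∈ l ↔ IsFacet K σ) ∧ k + 1 ≤ l.length ∧ DownSteps K d l k

/-- The boundary of a pure `d`-dimensional complex `K`: the subcomplex generated
by the `(d−1)`-faces (cardinality `d`) contained in exactly one `d`-face
(cardinality `d+1`). -/
def bdry (K : Set (Finset V)) (d : ℕ) : Set (Finset V) :=
  generatedBy K {σ : Finset V | σ ∈ K ∧ σ.card = d ∧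
    ∃! F, F ∈ K ∧ F.card = d + 1 ∧ σ ⊆ F}

/-- The polyhedron of a collection of geometric faces. -/
def poly {N : ℕ} (S : Set (Finset (EuclideanSpace ℝ (Fin N)))) :
    Set (EuclideanSpace ℝ (Fin N)) :=
  ⋃ σ ∈ S, convexHull ℝ (σ : Set (EuclideanSpace ℝ (Fin N)))

/-- `S` is homeomorphic to the closed `d`-dimensional ball. -/
def IsBallSet {N : ℕ} (d : ℕ) (S : Set (EuclideanSpace ℝ (Fin N))) : Prop :=
  Nonempty (↥S ≃ₜ ↥(Metric.closedBall (0 : EuclideanSpace ℝ (Fin d)) 1))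

/-!
Brouwer's theorem gives invariance of domain and of dimension. Hence in a triangulated `d`-ball
every `(d - 1)`-face lies in at most two `d`-faces, and some `(d - 1)`-face lies in only one.

A facet `F` removed by a shelling down has a restriction face `A`: the faces of `F` that survive are
those not containing `A`. Here `A` is nonempty because some facet survives. The `(d - 1)`-faces of
`F` containing `F \ A` survive, and they form a mod 2 cycle relative to the faces not containing
`F \ A`. Shellability of the surviving complex makes this cycle bound a set of surviving facets,
which together with `F` leaves no free `(d - 1)`-face around `F \ A`. As `(d - 1)`-faces lie in at
most two facets and stars in a shellable complex are strongly connected, this set together with `F`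
is the whole star of `F \ A`. If `A = F`, it would be the whole ball, which does have a free
`(d - 1)`-face; so `A` is a proper face. Moreover no boundary face contains `F \ A`, so the boundary
meets `F` in the facets opposite to the vertices of `F \ A`, a proper nonempty set of vertices.
Projecting `F` along the line through the barycentres of `A` and `F \ A` maps the union of these
facets homeomorphically onto a convex body.
-/

/-! ### Brouwer's fixed point theorem -/

section Brouwer

open Module Set Metric MeasureTheory
open scoped Topology NNReal

section Normed

variable {E : Type*} [NormedAddCommGroup E] [NormedSpace ℝ E]

theorem exists_polynomial_eval_eq_det_one_add_smul [FiniteDimensional ℝ E] (A : E →L[ℝ] E) :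
    ∃ p : Polynomial ℝ, p.natDegree ≤ finrank ℝ E ∧ ∀ t, p.eval t = (1 + t • A).det := by
  set b := finBasis ℝ E
  set M := LinearMap.toMatrix b b A.toLinearMap with hM
  refine ⟨((Polynomial.X : Polynomial ℝ) • M.map Polynomial.C +
    (1 : Matrix (Fin (finrank ℝ E)) (Fin (finrank ℝ E)) ℝ).map Polynomial.C).det, ?_, fun t => ?_⟩
  · simpa using Polynomial.natDegree_det_X_add_C_le M 1
  · have hdet : (1 + t • A).det = (t • M + 1).det := by
      rw [ContinuousLinearMap.det, ← LinearMap.det_toMatrix b, hM, add_comm, ← map_smul,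
        ← LinearMap.toMatrix_one b, ← map_add]
      rfl
    rw [hdet, ← Polynomial.coe_evalRingHom, RingHom.map_det]
    congr 1
    ext i j
    by_cases h : i = j <;> simp [h, mul_comm t]

theorem det_one_add_eq_sum_lagrange_basis [FiniteDimensional ℝ E] {s : Finset ℝ}
    (hs : finrank ℝ E < s.card) (A : E →L[ℝ] E) :
    (1 + A).det = ∑ t ∈ s, (Lagrange.basis s id t).eval 1 * (1 + t • A).det := by
  obtain ⟨p, hdeg, hp⟩ := exists_polynomial_eval_eq_det_one_add_smul A
  have hlt : p.degree < s.card :=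
    Polynomial.degree_le_natDegree.trans_lt (by exact_mod_cast hdeg.trans_lt hs)
  have hinterp := congrArg (Polynomial.eval 1) (Lagrange.eq_interpolate (injOn_id _) hlt)
  simpa [hp, Lagrange.interpolate_apply, Polynomial.eval_finsetSum, mul_comm] using hinterp

theorem exists_mem_segment_mem_frontier {D : Set E} (hD : IsClosed D) {x y : E} (hx : x ∈ D)
    (hy : y ∉ D) : ∃ p ∈ segment ℝ x y, p ∈ frontier D := by
  by_contra! hne
  have hcover : segment ℝ x y ⊆ interior D ∪ Dᶜ := fun p hp => by
    by_cases hpD : p ∈ D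
    · exact .inl (by_contra fun hpint => hne p hp ⟨subset_closure hpD, hpint⟩)
    · exact .inr hpD
  obtain ⟨p, -, hpint, hpD⟩ := (convex_segment x y).isPreconnected _ _ isOpen_interior
    hD.isOpen_compl hcover
    ⟨x, left_mem_segment ℝ x y, (hcover (left_mem_segment ℝ x y)).resolve_right (· hx)⟩
    ⟨y, right_mem_segment ℝ x y, hy⟩
  exact hpD (interior_subset hpint)

theorem lipschitzWith_indicator_of_eq_zero_frontier {F : Type*} [NormedAddCommGroup F]
    {D : Set E} (hD : IsClosed D) {K : ℝ≥0} {u : E → F} (hu : LipschitzOnWith K u D)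
    (hu0 : ∀ x ∈ frontier D, u x = 0) : LipschitzWith K (D.indicator u) := by
  have hout : ∀ x ∈ D, ∀ y ∉ D, dist (u x) 0 ≤ K * dist x y := fun x hx y hy => by
    obtain ⟨p, hp, hpD⟩ := exists_mem_segment_mem_frontier hD hx hy
    calc dist (u x) 0 = dist (u x) (u p) := by rw [hu0 p hpD]
      _ ≤ K * dist x p := hu.dist_le_mul x hx p (hD.frontier_subset hpD)
      _ ≤ K * dist x y := by
        gcongr
        linarith [dist_add_dist_of_mem_segment hp, dist_nonneg (x := p) (y := y)]
  refine LipschitzWith.of_dist_le_mul fun x y => ?_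
  by_cases hx : x ∈ D <;> by_cases hy : y ∈ D
  · simpa [hx, hy] using hu.dist_le_mul x hx y hy
  · simpa [hx, hy] using hout x hx y hy
  · simpa [hx, hy, dist_comm] using hout y hy x hx
  · simp only [indicator_of_notMem hx, indicator_of_notMem hy, dist_self]
    positivity

theorem bijective_id_add_of_lipschitzWith [CompleteSpace E] {K : ℝ≥0} (hK : K < 1) {w : E → E}
    (hw : LipschitzWith K w) : Function.Bijective fun x => x + w x := by
  have happrox : ApproximatesLinearOn (fun x => x + w x)
      (ContinuousLinearEquiv.refl ℝ E : E →L[ℝ] E) univ K := by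
    rw [ApproximatesLinearOn.approximatesLinearOn_iff_lipschitzOnWith]
    convert hw.lipschitzOnWith (s := univ) using 1
    ext x
    simp
  have hN : Subsingleton E ∨
      K < ‖((ContinuousLinearEquiv.refl ℝ E).symm : E →L[ℝ] E)‖₊⁻¹ :=
    (ContinuousLinearEquiv.refl ℝ E).subsingleton_or_nnnorm_symm_pos.imp_right fun hpos =>
      hK.trans_le ((one_le_inv₀ hpos).2 ContinuousLinearMap.norm_id_le)
  exact ⟨injOn_univ.1 (injOn_iff_injective.2 (happrox.injective hN)), happrox.surjective hN⟩

theorem bijOn_id_add_of_eq_zero_frontier [CompleteSpace E] {D : Set E} (hD : IsClosed D) {K : ℝ≥0}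
    (hK : K < 1) {u : E → E} (hu : LipschitzOnWith K u D) (hu0 : ∀ x ∈ frontier D, u x = 0) :
    BijOn (fun x => x + u x) D D := by
  have hbij := bijective_id_add_of_lipschitzWith hK
    (lipschitzWith_indicator_of_eq_zero_frontier hD hu hu0)
  set g : E → E := fun x => x + D.indicator u x with hg
  have hgD : EqOn g (fun x => x + u x) D := fun x hx => by simp [hg, hx]
  have hgDc : ∀ x ∉ D, g x = x := fun x hx => by simp [hg, hx]
  refine BijOn.congr ⟨fun x hx => ?_, hbij.1.injOn, fun y hy => ?_⟩ hgD
  · by_contra hgx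
    exact hgx (by rwa [hbij.1 (hgDc (g x) hgx)])
  · obtain ⟨x, rfl⟩ := hbij.2 y
    exact ⟨x, by_contra fun hx => hx (by rwa [hgDc x hx] at hy), rfl⟩

variable [FiniteDimensional ℝ E] [MeasurableSpace E] [BorelSpace E]
  (μ : Measure E) [μ.IsAddHaarMeasure] {D : Set E} {u : E → E}

theorem setIntegral_det_one_add_fderiv_of_lipschitzOnWith (hD : IsClosed D)
    (hu : Differentiable ℝ u) (hu0 : ∀ x ∈ frontier D, u x = 0) {K : ℝ≥0} (hK : K < 1)
    (hLip : LipschitzOnWith K u D) (hpos : ∀ x ∈ D, 0 < (1 + fderiv ℝ u x).det) :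
    ∫ x in D, (1 + fderiv ℝ u x).det ∂μ = μ.real D := by
  have hbij := bijOn_id_add_of_eq_zero_frontier hD hK hLip hu0
  have hderiv : ∀ x ∈ D, HasFDerivWithinAt (fun x => x + u x) (1 + fderiv ℝ u x) D x :=
    fun x _ => ((hasFDerivAt_id x).add (hu x).hasFDerivAt).hasFDerivWithinAt
  have hchange := integral_image_eq_integral_abs_det_fderiv_smul μ hD.measurableSet hderiv
    hbij.injOn fun _ => (1 : ℝ)
  rw [hbij.image_eq, setIntegral_const, smul_eq_mul, mul_one] at hchange
  rw [hchange]
  refine setIntegral_congr_fun hD.measurableSet fun x hx => ?_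
  simp only [abs_of_pos (hpos x hx), smul_eq_mul, mul_one]

theorem eventually_setIntegral_det_one_add_smul_fderiv (hD : IsCompact D) (hconv : Convex ℝ D)
    (hu : ContDiff ℝ 1 u) (hu0 : ∀ x ∈ frontier D, u x = 0) :
    ∀ᶠ t : ℝ in 𝓝 0, ∫ x in D, (1 + t • fderiv ℝ u x).det ∂μ = μ.real D := by
  have hdiff : Differentiable ℝ u := hu.differentiable one_ne_zero
  have hcont : Continuous (fderiv ℝ u) := hu.continuous_fderiv one_ne_zero
  obtain ⟨C, hC⟩ := hD.exists_bound_of_continuousOn hcont.continuousOn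
  have hpos : ∀ᶠ t : ℝ in 𝓝 0, ∀ x ∈ D, 0 < (1 + t • fderiv ℝ u x).det := by
    refine hD.eventually_forall_of_forall_eventually fun x _ => ?_
    have hdet : Continuous fun p : ℝ × E => (1 + p.1 • fderiv ℝ u p.2).det :=
      ContinuousLinearMap.continuous_det.comp (by fun_prop)
    exact hdet.continuousAt.eventually (lt_mem_nhds (by simp [ContinuousLinearMap.det]))
  have hsmall : ∀ᶠ t : ℝ in 𝓝 0, ‖t‖₊ * C.toNNReal < 1 := by
    have hmul : Continuous fun t : ℝ => ‖t‖₊ * C.toNNReal := by fun_prop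
    exact hmul.continuousAt.eventually (gt_mem_nhds (by simp))
  filter_upwards [hpos, hsmall] with t hpos hsmall
  have hfderiv : ∀ x, fderiv ℝ (t • u) x = t • fderiv ℝ u x := fun x =>
    fderiv_const_smul (hdiff x) t
  have hLip : LipschitzOnWith (‖t‖₊ * C.toNNReal) (t • u) D := by
    refine hconv.lipschitzOnWith_of_nnnorm_fderiv_le (𝕜 := ℝ)
      (fun x _ => (hdiff x).const_smul t) fun x hx => ?_
    rw [hfderiv, nnnorm_smul]
    gcongr
    exact NNReal.coe_le_coe.1 ((hC x hx).trans (Real.le_coe_toNNReal C))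
  simpa only [hfderiv] using setIntegral_det_one_add_fderiv_of_lipschitzOnWith μ hD.isClosed
    (hdiff.const_smul t) (fun x hx => by simp [hu0 x hx]) hsmall hLip
    (fun x hx => (hfderiv x).symm ▸ hpos x hx)

/- For small `t` the map `x ↦ x + t • u x` is a bijection of `D`; since the integrand is polynomial
in `t`, the resulting volume identity extends from small `t` to `t = 1`. -/
theorem setIntegral_det_one_add_fderiv (hD : IsCompact D) (hconv : Convex ℝ D)
    (hu : ContDiff ℝ 1 u) (hu0 : ∀ x ∈ frontier D, u x = 0) :
    ∫ x in D, (1 + fderiv ℝ u x).det ∂μ = μ.real D := by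
  have hcont : Continuous (fderiv ℝ u) := hu.continuous_fderiv one_ne_zero
  obtain ⟨s, hs, hcard⟩ := (infinite_of_mem_nhds (0 : ℝ)
    (eventually_setIntegral_det_one_add_smul_fderiv μ hD hconv hu hu0)).exists_subset_card_eq
    (finrank ℝ E + 1)
  have hlagrange := det_one_add_eq_sum_lagrange_basis (E := E) (Nat.lt_of_succ_le hcard.ge)
  have hsum : ∑ t ∈ s, (Lagrange.basis s id t).eval 1 = 1 := by
    simpa [ContinuousLinearMap.det] using (hlagrange 0).symm
  have hintegrable : ∀ t ∈ s, Integrable (fun x => (Lagrange.basis s id t).eval 1 *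
      (1 + t • fderiv ℝ u x).det) (μ.restrict D) := fun t _ =>
    (continuous_const.mul (ContinuousLinearMap.continuous_det.comp
      (continuous_const.add (hcont.const_smul t)))).continuousOn.integrableOn_compact hD
  calc ∫ x in D, (1 + fderiv ℝ u x).det ∂μ
      = ∑ t ∈ s, (Lagrange.basis s id t).eval 1 * ∫ x in D, (1 + t • fderiv ℝ u x).det ∂μ := by
        simp_rw [hlagrange (fderiv ℝ u _), integral_finsetSum s hintegrable, integral_const_mul]
    _ = ∑ t ∈ s, (Lagrange.basis s id t).eval 1 * μ.real D :=
        Finset.sum_congr rfl fun t ht => by rw [hs ht]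
    _ = μ.real D := by rw [← Finset.sum_mul, hsum, one_mul]

end Normed

section Inner

variable {E : Type*} [NormedAddCommGroup E] [InnerProductSpace ℝ E] [FiniteDimensional ℝ E]

theorem det_fderiv_eq_zero_of_norm_eq_one {h : E → E} (hdiff : Differentiable ℝ h)
    (hnorm : ∀ x, ‖h x‖ = 1) (x : E) : (fderiv ℝ h x).det = 0 := by
  by_contra hdet
  obtain ⟨v, hv⟩ : ∃ v, fderiv ℝ h x v = h x :=
    (LinearMap.equivOfDetNeZero (fderiv ℝ h x).toLinearMap hdet).surjective (h x)
  have hsq : HasFDerivAt (fun y => ‖h y‖ ^ 2) (0 : E →L[ℝ] ℝ) x := by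
    simpa [hnorm] using hasFDerivAt_const (1 : ℝ) x
  have hzero := congrArg (· v) ((hdiff x).hasFDerivAt.norm_sq.unique hsq)
  simp [hv, hnorm] at hzero

theorem not_contDiff_retraction_sphere {h : E → E} (hh : ContDiff ℝ 1 h) (hnorm : ∀ x, ‖h x‖ = 1)
    (hid : ∀ x ∈ sphere (0 : E) 1, h x = x) : False := by
  borelize E
  let μ : Measure E := Measure.addHaar
  have hdiff : Differentiable ℝ h := hh.differentiable one_ne_zero
  have hvol := setIntegral_det_one_add_fderiv μ (isCompact_closedBall (0 : E) 1)
    (convex_closedBall 0 1) (hh.sub contDiff_id) fun x hx => by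
      rw [frontier_closedBall _ one_ne_zero] at hx
      simp [hid x hx]
  have hzero : ∀ x, (1 + fderiv ℝ (fun x => h x - id x) x).det = 0 := fun x => by
    have hfd : fderiv ℝ (fun x => h x - id x) x = fderiv ℝ h x - 1 :=
      ((hdiff x).hasFDerivAt.sub (hasFDerivAt_id x)).fderiv
    rw [hfd, add_sub_cancel, det_fderiv_eq_zero_of_norm_eq_one hdiff hnorm]
  simp_rw [hzero, integral_zero] at hvol
  exact (ENNReal.toReal_pos (measure_closedBall_pos μ 0 one_pos).ne'
    (isCompact_closedBall 0 1).measure_ne_top).ne hvol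

theorem exists_fixedPoint_of_contDiff {f : E → E} (hf : ContDiff ℝ 1 f) {r : ℝ} (hr0 : 0 < r)
    (hr1 : r < 1) (hfr : ∀ x ∈ closedBall (0 : E) 1, ‖f x‖ ≤ r) :
    ∃ x ∈ closedBall (0 : E) 1, f x = x := by
  by_contra! hne
  let χ : ContDiffBump (0 : E) := ⟨r, 1, hr0, hr1⟩
  have hχ : ∀ x : E, 1 ≤ ‖x‖ → χ x = 0 := fun x hx => χ.zero_of_le_dist (by simpa using hx)
  set g : E → E := fun x => x - χ x • f x with hg
  have hg0 : ∀ x, g x ≠ 0 := fun x hgx => by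
    have hx : x = χ x • f x := sub_eq_zero.1 hgx
    rcases le_or_gt 1 ‖x‖ with hx1 | hx1
    · simp [hχ x hx1] at hx
      norm_num [hx] at hx1
    have hxD : x ∈ closedBall (0 : E) 1 := by simpa using hx1.le
    have hxr : ‖x‖ ≤ r := calc
      ‖x‖ = χ x * ‖f x‖ := by rw [congrArg norm hx, norm_smul, Real.norm_of_nonneg χ.nonneg]
      _ ≤ 1 * r := by gcongr; exacts [χ.le_one, hfr x hxD]
      _ = r := one_mul r
    refine hne x hxD ?_
    rw [χ.one_of_mem_closedBall (by simpa using hxr), one_smul] at hx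
    exact hx.symm
  have hgc : ContDiff ℝ 1 g := contDiff_id.sub (χ.contDiff.smul hf)
  refine not_contDiff_retraction_sphere (h := fun x => ‖g x‖⁻¹ • g x)
    (((hgc.norm ℝ hg0).inv fun x => norm_ne_zero_iff.2 (hg0 x)).smul hgc)
    (fun x => ?_) fun x hx => ?_
  · rw [norm_smul, norm_inv, norm_norm, inv_mul_cancel₀ (norm_ne_zero_iff.2 (hg0 x))]
  · have hx1 : ‖x‖ = 1 := by simpa using hx
    simp [hg, hχ x hx1.ge, hx1]

theorem exists_continuous_eqOn_of_isClosed {X F : Type*} [TopologicalSpace X] [NormalSpace X]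
    [NormedAddCommGroup F] [NormedSpace ℝ F] [FiniteDimensional ℝ F] {s : Set X} (hs : IsClosed s)
    {f : X → F} (hf : ContinuousOn f s) : ∃ g : X → F, Continuous g ∧ EqOn g f s := by
  obtain ⟨g, hg⟩ := ContinuousMap.exists_restrict_eq hs ⟨s.domRestrict f, hf.domRestrict⟩
  exact ⟨g, g.continuous, fun x hx => DFunLike.congr_fun hg ⟨x, hx⟩⟩

/-- Brouwer's fixed point theorem. -/
theorem exists_fixedPoint_closedBall {f : E → E} (hf : ContinuousOn f (closedBall 0 1))
    (hmaps : MapsTo f (closedBall 0 1) (closedBall 0 1)) :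
    ∃ x ∈ closedBall (0 : E) 1, f x = x := by
  by_contra! hne
  have h0 : (0 : E) ∈ closedBall (0 : E) 1 := mem_closedBall_self zero_le_one
  obtain ⟨x₀, hx₀, hmin⟩ := (isCompact_closedBall (0 : E) 1).exists_isMinOn ⟨0, h0⟩
    (hf.sub continuousOn_id).norm
  set δ : ℝ := ‖f x₀ - x₀‖ / 4 with hδ
  have hδ0 : 0 < δ := by have := norm_pos_iff.2 (sub_ne_zero.2 (hne x₀ hx₀)); positivity
  have hδf : ∀ x ∈ closedBall (0 : E) 1, 4 * δ ≤ ‖f x - x‖ := fun x hx => by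
    have : ‖f x₀ - x₀‖ ≤ ‖f x - x‖ := hmin hx
    linarith
  have hf1 : ∀ x ∈ closedBall (0 : E) 1, ‖f x‖ ≤ 1 := fun x hx => by simpa using hmaps hx
  have hδ1 : 4 * δ ≤ 1 := (hδf 0 h0).trans (by simpa using hf1 0 h0)
  obtain ⟨F, hF, hFf⟩ := exists_continuous_eqOn_of_isClosed isClosed_closedBall hf
  obtain ⟨f₁, hf₁, hdist, -⟩ := (hF.const_smul (1 - δ)).exists_contDiff_approx 1
    (ε := fun _ => δ / 2) continuous_const fun _ => by positivity
  have happrox : ∀ x ∈ closedBall (0 : E) 1, ‖f₁ x - (1 - δ) • f x‖ ≤ δ / 2 := fun x hx => by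
    simpa [hFf hx, dist_eq_norm] using (hdist x).le
  have hshrink : ∀ x ∈ closedBall (0 : E) 1, ‖(1 - δ) • f x‖ ≤ 1 - δ := fun x hx => by
    rw [norm_smul, Real.norm_of_nonneg (by linarith)]
    exact mul_le_of_le_one_right (by linarith) (hf1 x hx)
  obtain ⟨x, hx, hfx⟩ := exists_fixedPoint_of_contDiff hf₁ (r := 1 - δ / 2) (by linarith)
    (by linarith) fun x hx => by
      linarith [norm_le_norm_add_norm_sub ((1 - δ) • f x) (f₁ x), happrox x hx, hshrink x hx,
        norm_sub_rev ((1 - δ) • f x) (f₁ x)]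
  have hmove : ‖f x - (1 - δ) • f x‖ ≤ δ := by
    rw [show f x - (1 - δ) • f x = δ • f x by module, norm_smul, Real.norm_of_nonneg hδ0.le]
    exact mul_le_of_le_one_right hδ0.le (hf1 x hx)
  have htri := norm_sub_le_norm_sub_add_norm_sub (f x) ((1 - δ) • f x) x
  have happ := happrox x hx
  rw [hfx, norm_sub_rev] at happ
  linarith [hδf x hx]

theorem exists_eq_zero_of_norm_sub_le_one {g : E → E} (hg : ContinuousOn g (closedBall 0 1))
    (hclose : ∀ x ∈ closedBall (0 : E) 1, ‖x - g x‖ ≤ 1) : ∃ x ∈ closedBall (0 : E) 1, g x = 0 := by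
  obtain ⟨x, hx, hfix⟩ := exists_fixedPoint_closedBall (continuousOn_id.sub hg)
    fun x hx => by simpa using hclose x hx
  exact ⟨x, hx, sub_eq_self.1 hfix⟩

end Inner

end Brouwer

/-! ### Invariance of domain and of dimension -/

section InvarianceOfDomain

open Module Set Metric MeasureTheory
open scoped Topology

section PushOut

variable {E : Type*} [NormedAddCommGroup E] [NormedSpace ℝ E]

/-- The radial push-out of the punctured ball of radius `ε` around `c` onto its sphere, fixing all
points outside the ball. At the centre `c` itself the value is the junk value `c`. -/
noncomputable def pushOut (c : E) (ε : ℝ) (y : E) : E :=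
  c + max (ε / ‖y - c‖) 1 • (y - c)

theorem pushOut_of_le {c y : E} {ε : ℝ} (h : ε ≤ ‖y - c‖) : pushOut c ε y = y := by
  rw [pushOut, max_eq_right (div_le_one_of_le₀ h (norm_nonneg _)), one_smul, add_sub_cancel]

theorem norm_pushOut_sub {c y : E} {ε : ℝ} (hy : y ≠ c) (h : ‖y - c‖ ≤ ε) :
    ‖pushOut c ε y - c‖ = ε := by
  have hpos : 0 < ‖y - c‖ := norm_pos_iff.2 (sub_ne_zero.2 hy)
  rw [pushOut, max_eq_left ((one_le_div hpos).2 h), add_sub_cancel_left, norm_smul,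
    Real.norm_of_nonneg (div_nonneg (hpos.le.trans h) hpos.le), div_mul_cancel₀ _ hpos.ne']

theorem continuousOn_pushOut (c : E) (ε : ℝ) : ContinuousOn (pushOut c ε) {c}ᶜ := by
  have hdiv : ContinuousOn (fun y => ε / ‖y - c‖) {c}ᶜ := continuousOn_const.div (by fun_prop)
    fun y hy => norm_ne_zero_iff.2 (sub_ne_zero.2 hy)
  exact continuousOn_const.add ((hdiv.sup continuousOn_const).smul (by fun_prop))

end PushOut

section Perturbation

variable {E : Type*} [NormedAddCommGroup E] [NormedSpace ℝ E] [FiniteDimensional ℝ E]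
  {G : E → E} {δ ε : ℝ}

/- A `C¹` approximation maps the sphere to a null set, so a small translate avoids `0` on it. -/
theorem exists_continuous_approx_ne_zero_sphere (hG : Continuous G) (hδ : 0 < δ) (c : E)
    (hε : ε ≠ 0) :
    ∃ P : E → E, Continuous P ∧ (∀ y, ‖P y - G y‖ < δ) ∧ ∀ y ∈ sphere c ε, P y ≠ 0 := by
  borelize E
  let μ : Measure E := Measure.addHaar
  obtain ⟨P, hP, hdist, -⟩ := hG.exists_contDiff_approx 1 (ε := fun _ => δ / 2)
    continuous_const fun _ => half_pos hδ
  have hnull : μ (P '' sphere c ε) = 0 :=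
    addHaar_image_eq_zero_of_differentiableOn_of_addHaar_eq_zero μ
      (hP.differentiable one_ne_zero).differentiableOn (μ.addHaar_sphere_of_ne_zero c hε)
  obtain ⟨b, hb, hbP⟩ : ∃ b ∈ ball (0 : E) (δ / 2), b ∉ P '' sphere c ε := by
    by_contra! hsub
    exact (measure_ball_pos μ (0 : E) (half_pos hδ)).ne' (measure_mono_null hsub hnull)
  refine ⟨fun y => P y - b, hP.continuous.sub continuous_const, fun y => ?_, fun y hy hPy =>
    hbP ⟨y, hy, sub_eq_zero.1 hPy⟩⟩
  calc ‖P y - b - G y‖ = ‖(P y - G y) - b‖ := by rw [sub_right_comm]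
    _ ≤ ‖P y - G y‖ + ‖b‖ := norm_sub_le _ _
    _ < δ / 2 + δ / 2 := by
      rw [← dist_eq_norm]
      exact add_lt_add (hdist y) (mem_ball_zero_iff.1 hb)
    _ = δ := add_halves δ

theorem exists_continuousOn_ne_zero_near_pushOut (hG : Continuous G) {K : Set E}
    (hK : IsCompact K) {c : E} (hc : c ∉ K) (hε : ε ≠ 0)
    (hG0 : ∀ y ∈ K, ε ≤ ‖y - c‖ → G y ≠ 0) (hδ : 0 < δ) :
    ∃ Q : E → E, ContinuousOn Q K ∧ ∀ y ∈ K, Q y ≠ 0 ∧ ‖Q y - G (pushOut c ε y)‖ < δ := by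
  obtain ⟨m, hm, hmG⟩ : ∃ m > 0, ∀ y ∈ K ∩ {y | ε ≤ ‖y - c‖}, m ≤ ‖G y‖ :=
    (hK.inter_right (isClosed_le continuous_const (by fun_prop))).exists_forall_le'
      hG.norm.continuousOn fun y hy => norm_pos_iff.2 (hG0 y hy.1 hy.2)
  obtain ⟨P, hP, hPG, hP0⟩ := exists_continuous_approx_ne_zero_sphere hG (lt_min hδ hm) c hε
  have hKc : K ⊆ {c}ᶜ := fun y hy hyc => hc (hyc ▸ hy)
  refine ⟨fun y => P (pushOut c ε y), hP.comp_continuousOn ((continuousOn_pushOut c ε).mono hKc),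
    fun y hy => ⟨fun (hPy : P (pushOut c ε y) = 0) => ?_, (hPG _).trans_le (min_le_left _ _)⟩⟩
  rcases le_total ε ‖y - c‖ with hfar | hnear
  · have hlt := hPG y
    rw [pushOut_of_le hfar] at hPy
    rw [hPy, zero_sub, norm_neg] at hlt
    exact (hlt.trans_le (min_le_right _ _)).not_ge (hmG y ⟨hy, hfar⟩)
  · exact hP0 _ (mem_sphere_iff_norm.2 (norm_pushOut_sub (hKc hy) hnear)) hPy

end Perturbation

theorem exists_continuous_leftInvOn {X F : Type*} [TopologicalSpace X] [T4Space X]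
    [NormedAddCommGroup F] [NormedSpace ℝ F] [FiniteDimensional ℝ F] {s : Set F} (hs : IsCompact s)
    {f : F → X} (hf : ContinuousOn f s) (hinj : InjOn f s) :
    ∃ G : X → F, Continuous G ∧ LeftInvOn G f s := by
  have : CompactSpace s := isCompact_iff_compactSpace.1 hs
  obtain ⟨G, hG⟩ := ContinuousMap.exists_extension (Y := F)
    (hf.domRestrict.isClosedEmbedding (injOn_iff_injective.1 hinj)) ⟨_, continuous_subtype_val⟩
  exact ⟨G, G.continuous, fun x hx => DFunLike.congr_fun hG ⟨x, hx⟩⟩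

/- If `f 0` were not interior, some `c ∉ f '' closedBall 0 1` close to it would allow pushing the
image off `c`; a perturbed left inverse then has no zero although it is close to the identity. -/
theorem image_closedBall_mem_nhds {E : Type*} [NormedAddCommGroup E] [InnerProductSpace ℝ E]
    [FiniteDimensional ℝ E] {f : E → E} (hf : ContinuousOn f (closedBall 0 1))
    (hinj : InjOn f (closedBall 0 1)) : f '' closedBall 0 1 ∈ 𝓝 (f 0) := by
  have hcomp := isCompact_closedBall (0 : E) 1
  obtain ⟨G, hGc, hG⟩ := exists_continuous_leftInvOn hcomp hf hinj
  have hG0 : G (f 0) = 0 := hG (mem_closedBall_self zero_le_one)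
  obtain ⟨ε, hε, hεG⟩ : ∃ ε > 0, ∀ y, dist y (f 0) < ε + ε → ‖G y‖ < 1 / 4 := by
    have hsmall : ∀ᶠ y in 𝓝 (f 0), ‖G y‖ < 1 / 4 :=
      hGc.norm.continuousAt.eventually (gt_mem_nhds (by norm_num [hG0]))
    obtain ⟨r, hr, hrG⟩ := Metric.eventually_nhds_iff.1 hsmall
    exact ⟨r / 2, half_pos hr, fun y hy => hrG (by rwa [add_halves] at hy)⟩
  by_contra hnot
  obtain ⟨c, hc0, hc⟩ : ∃ c ∈ ball (f 0) ε, c ∉ f '' closedBall 0 1 :=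
    not_subset.1 fun hsub => hnot (Filter.mem_of_superset (ball_mem_nhds _ hε) hsub)
  have hcG : ∀ y, ‖y - c‖ ≤ ε → ‖G y‖ < 1 / 4 := fun y hy =>
    hεG y ((dist_triangle y c (f 0)).trans_lt (by
      rw [dist_eq_norm y c]
      exact add_lt_add_of_le_of_lt hy hc0))
  obtain ⟨Q, hQc, hQ⟩ := exists_continuousOn_ne_zero_near_pushOut hGc
    (hcomp.image_of_continuousOn hf) hc hε.ne' (δ := 1 / 2) (by
      rintro _ ⟨x, hx, rfl⟩ hfar hGx
      rw [hG hx] at hGx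
      rw [hGx, norm_sub_rev, ← dist_eq_norm] at hfar
      exact (mem_ball.1 hc0).not_ge hfar) (by norm_num)
  obtain ⟨x, hx, hQx⟩ := exists_eq_zero_of_norm_sub_le_one (hQc.comp hf (mapsTo_image f _))
    fun x hx => by
      have hQG := (hQ (f x) (mem_image_of_mem f hx)).2
      have hGx : ‖x - G (pushOut c ε (f x))‖ ≤ 1 / 2 := by
        rcases le_total ε ‖f x - c‖ with hfar | hnear
        · norm_num [pushOut_of_le hfar, hG hx]
        · have hfx : f x ≠ c := fun h => hc ⟨x, hx, h⟩
          have hx4 := hcG _ hnear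
          rw [hG hx] at hx4
          linarith [norm_sub_le x (G (pushOut c ε (f x))), hcG _ (norm_pushOut_sub hfx hnear).le]
      rw [norm_sub_rev] at hQG
      exact (norm_sub_le_norm_sub_add_norm_sub _ (G (pushOut c ε (f x))) _).trans (by
        simpa using (add_le_add hGx hQG.le).trans (by norm_num))
  exact (hQ (f x) (mem_image_of_mem f hx)).1 hQx

variable {E F : Type*} [NormedAddCommGroup E] [NormedSpace ℝ E] [FiniteDimensional ℝ E]
  [NormedAddCommGroup F] [NormedSpace ℝ F] [FiniteDimensional ℝ F]

/-- Invariance of domain. -/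
theorem image_mem_nhds_of_injOn (hdim : finrank ℝ E = finrank ℝ F) {f : E → F} {s : Set E} {x : E}
    (hs : s ∈ 𝓝 x) (hf : ContinuousOn f s) (hinj : InjOn f s) : f '' s ∈ 𝓝 (f x) := by
  let eE : E ≃L[ℝ] EuclideanSpace ℝ (Fin (finrank ℝ E)) := toEuclidean
  let eF : F ≃L[ℝ] EuclideanSpace ℝ (Fin (finrank ℝ E)) :=
    ContinuousLinearEquiv.ofFinrankEq (by simp [hdim])
  obtain ⟨r, hr, hball⟩ : ∃ r > 0, closedBall 0 r ⊆ (fun z => x + eE.symm z) ⁻¹' s :=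
    nhds_basis_closedBall.mem_iff.1 (ContinuousAt.preimage_mem_nhds (by fun_prop) (by simpa))
  let φ : EuclideanSpace ℝ (Fin (finrank ℝ E)) → E := fun z => x + eE.symm (r • z)
  have hφ0 : φ 0 = x := by simp [φ]
  have hφ : MapsTo φ (closedBall 0 1) s := fun z hz => hball (by
    simpa [norm_smul, abs_of_pos hr] using
      mul_le_of_le_one_right hr.le (mem_closedBall_zero_iff.1 hz))
  have hφinj : φ.Injective := fun z w hzw => by simpa [φ, hr.ne'] using hzw
  have himage := image_closedBall_mem_nhds (f := fun z => eF (f (φ z)))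
    (eF.continuous.comp_continuousOn (hf.comp (by fun_prop) hφ))
    (eF.injective.comp_injOn (hinj.comp hφinj.injOn hφ))
  rw [hφ0] at himage
  refine Filter.mem_of_superset (eF.continuous.continuousAt.preimage_mem_nhds himage) ?_
  rintro y ⟨z, hz, hzy⟩
  exact ⟨φ z, hφ hz, eF.injective hzy⟩

theorem finrank_le_of_continuousOn_injOn {f : E → F} {s : Set E} {x : E} (hs : s ∈ 𝓝 x)
    (hf : ContinuousOn f s) (hinj : InjOn f s) : finrank ℝ E ≤ finrank ℝ F := by
  by_contra! hlt
  obtain ⟨J, hJ⟩ : ∃ J : F →ₗ[ℝ] E, Function.Injective J :=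
    finrank_le_iff_exists_linearMap.1 hlt.le
  have himage := image_mem_nhds_of_injOn rfl hs
    (J.continuous_of_finiteDimensional.comp_continuousOn hf) (hJ.comp_injOn hinj)
  have htop : LinearMap.range J = ⊤ := Submodule.eq_top_of_nonempty_interior' _
    ⟨_, mem_interior_iff_mem_nhds.2 (Filter.mem_of_superset himage (by
      rintro _ ⟨z, -, rfl⟩
      exact ⟨f z, rfl⟩))⟩
  exact hlt.not_ge (LinearMap.finrank_le_finrank_of_surjective (LinearMap.range_eq_top.1 htop))

theorem finrank_le_succ_of_injOn_sphere {k : E → F} {U : Set E} (hU : IsOpen U)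
    (hne : (U ∩ sphere 0 1).Nonempty) (hk : ContinuousOn k (U ∩ sphere 0 1))
    (hinj : InjOn k (U ∩ sphere 0 1)) : finrank ℝ E ≤ finrank ℝ F + 1 := by
  obtain ⟨z₀, hz₀U, hz₀⟩ := hne
  have hz₀1 : ‖z₀‖ = 1 := mem_sphere_zero_iff_norm.1 hz₀
  have hnormalize : ContinuousOn (fun z : E => ‖z‖⁻¹ • z) {0}ᶜ :=
    (continuousOn_id.norm.inv₀ fun z hz => norm_ne_zero_iff.2 hz).smul continuousOn_id
  set s : Set E := {0}ᶜ ∩ (fun z : E => ‖z‖⁻¹ • z) ⁻¹' U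
  have hs : s ∈ 𝓝 z₀ := by
    refine (hnormalize.isOpen_inter_preimage isOpen_compl_singleton hU).mem_nhds ⟨?_, ?_⟩
    · simpa using norm_ne_zero_iff.1 (by simp [hz₀1] : ‖z₀‖ ≠ 0)
    · simpa [hz₀1] using hz₀U
  have hmaps : MapsTo (fun z : E => ‖z‖⁻¹ • z) s (U ∩ sphere 0 1) := fun z hz => ⟨hz.2, by
    rw [mem_sphere_zero_iff_norm, norm_smul, norm_inv, norm_norm,
      inv_mul_cancel₀ (norm_ne_zero_iff.2 hz.1)]⟩
  have hle := finrank_le_of_continuousOn_injOn (f := fun z => (k (‖z‖⁻¹ • z), ‖z‖)) hs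
    ((hk.comp (hnormalize.mono inter_subset_left) hmaps).prodMk continuous_norm.continuousOn)
    fun z hz w hw hzw => by
      obtain ⟨hkzw, hnorm⟩ := Prod.mk.inj hzw
      have heq : ‖z‖⁻¹ • z = ‖w‖⁻¹ • w := hinj (hmaps hz) (hmaps hw) hkzw
      rw [hnorm] at heq
      exact smul_right_injective E (inv_ne_zero (norm_ne_zero_iff.2 hw.1)) heq
  simpa using hle

theorem finrank_le_card_of_injOn_sphere_mapsTo_convexHull {k : E → F} {U : Set E} (hU : IsOpen U)
    (hne : (U ∩ sphere 0 1).Nonempty) (hk : ContinuousOn k (U ∩ sphere 0 1))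
    (hinj : InjOn k (U ∩ sphere 0 1)) {ρ : Finset F}
    (hρ : MapsTo k (U ∩ sphere 0 1) (convexHull ℝ (ρ : Set F))) : finrank ℝ E ≤ ρ.card := by
  obtain ⟨v₀, hv₀⟩ : ρ.Nonempty := by
    obtain ⟨z, hz⟩ := hne
    simpa using convexHull_nonempty_iff.1 ⟨k z, hρ hz⟩
  set W := vectorSpan ℝ (ρ : Set F) with hW
  obtain ⟨π, hπ⟩ := W.subtype.exists_leftInverse_of_injective (Submodule.ker_subtype W)
  have hsub : ∀ z ∈ U ∩ sphere 0 1, k z - v₀ ∈ W := fun z hz => by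
    rw [hW, ← direction_affineSpan]
    exact AffineSubspace.vsub_mem_direction (convexHull_subset_affineSpan _ (hρ hz))
      (subset_affineSpan ℝ _ hv₀)
  have hπk : ∀ z ∈ U ∩ sphere 0 1, (π (k z - v₀) : F) = k z - v₀ := fun z hz =>
    congrArg W.subtype (LinearMap.congr_fun hπ ⟨_, hsub z hz⟩)
  have hle := finrank_le_succ_of_injOn_sphere (k := fun z => π (k z - v₀)) hU hne
    (π.continuous_of_finiteDimensional.comp_continuousOn (hk.sub continuousOn_const))
    fun z hz w hw hzw => hinj hz hw (by
      have hval := congrArg W.subtype hzw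
      simpa only [Submodule.subtype_apply, hπk z hz, hπk w hw, sub_left_inj] using hval)
  have : Nonempty ρ := ⟨⟨v₀, hv₀⟩⟩
  have hrank := finrank_vectorSpan_range_add_one_le ℝ ((↑) : ρ → F)
  rw [Subtype.range_coe_subtype, Finset.setOfPred_mem, Fintype.card_coe] at hrank
  exact hle.trans hrank

theorem exists_mem_sphere_notMem_convexHull [Nontrivial E] {k : E → F}
    (hk : ContinuousOn k (sphere 0 1)) (hinj : InjOn k (sphere 0 1)) {S : Set (Finset F)}
    (hS : S.Countable) (hcard : ∀ ρ ∈ S, ρ.card < finrank ℝ E) :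
    ∃ z ∈ sphere (0 : E) 1, ∀ ρ ∈ S, k z ∉ convexHull ℝ (ρ : Set F) := by
  by_contra! hcover
  have : Countable S := hS.to_subtype
  have : Nonempty (sphere (0 : E) 1) := (NormedSpace.sphere_nonempty.2 zero_le_one).to_subtype
  obtain ⟨⟨ρ, hρ⟩, z, hz⟩ := nonempty_interior_of_iUnion_of_closed
    (f := fun ρ : S => (sphere (0 : E) 1).domRestrict k ⁻¹' convexHull ℝ (ρ : Set F))
    (fun ρ => ((ρ : Finset F).finite_toSet.isCompact_convexHull ℝ).isClosed.preimage hk.domRestrict)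
    (eq_univ_of_forall fun z => mem_iUnion.2 (by
      obtain ⟨ρ, hρ, hz⟩ := hcover z z.2
      exact ⟨⟨ρ, hρ⟩, hz⟩))
  obtain ⟨U, hU, hUint⟩ := isOpen_induced_iff.1 (isOpen_interior (s :=
    (sphere (0 : E) 1).domRestrict k ⁻¹' convexHull ℝ (ρ : Set F)))
  refine (hcard ρ hρ).not_ge (finrank_le_card_of_injOn_sphere_mapsTo_convexHull hU
    ⟨z, (hUint ▸ hz : z ∈ Subtype.val ⁻¹' U), z.2⟩ (hk.mono inter_subset_right)
    (hinj.mono inter_subset_right) fun y hy => ?_)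
  have hyint : (⟨y, hy.2⟩ : sphere (0 : E) 1) ∈ Subtype.val ⁻¹' U := hy.1
  rw [hUint] at hyint
  exact (interior_subset hyint :)

end InvarianceOfDomain

/-! ### Barycentric weights in a simplicial complex -/

section BarycentricWeights

open Module Set Metric Finsupp Geometry
open scoped Topology

section Weights

variable {E : Type*} {F G : Finset E} {W W' : E →₀ ℝ}

/-- `W` is a system of barycentric weights on the vertex set `F`. The weights live on all of `E`, so
that weights on different simplices can be compared. -/
structure IsBarycentric (F : Finset E) (W : E →₀ ℝ) : Prop where
  support_subset : W.support ⊆ F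
  nonneg : ∀ v, 0 ≤ W v
  total_eq_one : linearCombination ℝ (fun _ => (1 : ℝ)) W = 1

theorem IsBarycentric.apply_eq_zero (hW : IsBarycentric F W) {v : E} (hv : v ∉ F) : W v = 0 :=
  notMem_support_iff.1 fun h => hv (hW.support_subset h)

theorem IsBarycentric.mono (hW : IsBarycentric F W) (h : F ⊆ G) : IsBarycentric G W :=
  ⟨hW.support_subset.trans h, hW.nonneg, hW.total_eq_one⟩

theorem IsBarycentric.support (hW : IsBarycentric F W) : IsBarycentric W.support W :=
  ⟨subset_rfl, hW.nonneg, hW.total_eq_one⟩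

theorem IsBarycentric.support_nonempty (hW : IsBarycentric F W) : W.support.Nonempty := by
  rw [support_nonempty_iff]
  rintro rfl
  simpa using hW.total_eq_one

theorem linearCombination_eq_sum_of_support_subset {M : Type*} [AddCommGroup M] [Module ℝ M]
    (hW : W.support ⊆ F) (f : E → M) : linearCombination ℝ f W = ∑ v ∈ F, W v • f v :=
  linearCombination_apply_of_mem_supported ℝ ((mem_supported ℝ W).2 (Finset.coe_subset.2 hW))

theorem IsBarycentric.sum_eq_one (hW : IsBarycentric F W) : ∑ v ∈ F, W v = 1 := by
  simpa [linearCombination_eq_sum_of_support_subset hW.support_subset] using hW.total_eq_one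

theorem exists_isBarycentric_pos (hF : F.Nonempty) :
    ∃ W, IsBarycentric F W ∧ ∀ v ∈ F, 0 < W v := by
  have happly : ∀ v, (∑ v ∈ F, single v (F.card : ℝ)⁻¹) v = if v ∈ F then (F.card : ℝ)⁻¹ else 0 :=
    fun v => by simp [finsetSum_apply, single_apply]
  have hcard : 0 < (F.card : ℝ) := by exact_mod_cast hF.card_pos
  refine ⟨∑ v ∈ F, single v (F.card : ℝ)⁻¹, ⟨fun v hv => ?_, fun v => ?_, ?_⟩, fun v hv => ?_⟩
  · by_contra hvF
    exact mem_support_iff.1 hv (by rw [happly, if_neg hvF])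
  · rw [happly]
    positivity
  · simp [hcard.ne']
  · rw [happly, if_pos hv]
    positivity

theorem IsBarycentric.lineMap_single (hW : IsBarycentric F W) (c : E)
    {t : ℝ} (ht : t ∈ Icc 0 1) :
    IsBarycentric (insert c F) (AffineMap.lineMap W (single c 1) t) := by
  have h1t : 0 ≤ 1 - t := sub_nonneg.2 ht.2
  have happly : ∀ v, AffineMap.lineMap W (single c 1) t v = (1 - t) * W v + t * single c 1 v := by
    intro v
    simp [AffineMap.lineMap_apply_module, single_apply]
  refine ⟨fun v hv => ?_, fun v => ?_, ?_⟩
  · by_contra hmem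
    simp only [Finset.mem_insert, not_or] at hmem
    exact mem_support_iff.1 hv (by simp [happly, hW.apply_eq_zero hmem.2, Ne.symm hmem.1])
  · rw [happly, single_apply]
    have := hW.nonneg v
    have := ht.1
    positivity
  · simp [AffineMap.lineMap_apply_module, hW.total_eq_one]

end Weights

section WeightedPoint

variable {E : Type*} [AddCommGroup E] [Module ℝ E] {F G : Finset E} {W W' : E →₀ ℝ}

/-- The affine combination of points of `E` with the given weights, each point being used as its own
index. -/
noncomputable def weightedPoint (W : E →₀ ℝ) : E := linearCombination ℝ id W

theorem weightedPoint_sub (W W' : E →₀ ℝ) :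
    weightedPoint (W - W') = weightedPoint W - weightedPoint W' := map_sub _ _ _

theorem weightedPoint_smul (t : ℝ) (W : E →₀ ℝ) : weightedPoint (t • W) = t • weightedPoint W :=
  map_smul _ _ _

theorem mem_convexHull_iff_exists_isBarycentric {x : E} :
    x ∈ convexHull ℝ (F : Set E) ↔ ∃ W, IsBarycentric F W ∧ weightedPoint W = x := by
  rw [Finset.mem_convexHull']
  constructor
  · rintro ⟨w, hnonneg, hsum, hx⟩
    let W : E →₀ ℝ := ∑ v ∈ F, single v (w v)
    have happly : ∀ v, W v = if v ∈ F then w v else 0 := fun v => by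
      simp [W, finsetSum_apply, single_apply]
    refine ⟨W, ⟨fun v hv => ?_, fun v => ?_, ?_⟩, ?_⟩
    · by_contra hvF
      exact mem_support_iff.1 hv (by rw [happly, if_neg hvF])
    · rw [happly]
      split_ifs with hv
      exacts [hnonneg v hv, le_rfl]
    · simpa [W] using hsum
    · simpa [W, weightedPoint] using hx
  · rintro ⟨W, hW, rfl⟩
    exact ⟨W, fun v _ => hW.nonneg v, hW.sum_eq_one,
      (linearCombination_eq_sum_of_support_subset hW.support_subset id).symm⟩

theorem IsBarycentric.weightedPoint_mem_convexHull (hW : IsBarycentric F W) :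
    weightedPoint W ∈ convexHull ℝ (F : Set E) :=
  mem_convexHull_iff_exists_isBarycentric.2 ⟨W, hW, rfl⟩

theorem eq_zero_of_affineIndependent (hF : AffineIndependent ℝ ((↑) : F → E)) (hW : W.support ⊆ F)
    (htotal : linearCombination ℝ (fun _ => (1 : ℝ)) W = 0) (hpoint : weightedPoint W = 0) :
    W = 0 := by
  rw [linearCombination_eq_sum_of_support_subset hW, ← Finset.sum_coe_sort] at htotal
  rw [weightedPoint, linearCombination_eq_sum_of_support_subset hW, ← Finset.sum_coe_sort] at hpoint
  have hzero := affineIndependent_iff.1 hF Finset.univ (fun v => W v) (by simpa using htotal) hpoint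
  ext v
  by_contra hv
  exact hv (hzero ⟨v, hW (mem_support_iff.2 hv)⟩ (Finset.mem_univ _))

theorem IsBarycentric.eq_of_affineIndependent (hF : AffineIndependent ℝ ((↑) : F → E))
    (hW : IsBarycentric F W) (hW' : IsBarycentric F W')
    (hpoint : weightedPoint W = weightedPoint W') : W = W' := by
  refine sub_eq_zero.1 (eq_zero_of_affineIndependent hF
    (support_sub.trans (Finset.union_subset hW.support_subset hW'.support_subset)) ?_ ?_)
  · rw [map_sub, hW.total_eq_one, hW'.total_eq_one, sub_self]
  · rw [weightedPoint_sub, hpoint, sub_self]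

theorem IsBarycentric.eq_of_mem_faces {K : SimplicialComplex ℝ E} (hF : F ∈ K.faces)
    (hG : G ∈ K.faces) (hW : IsBarycentric F W) (hW' : IsBarycentric G W')
    (hpoint : weightedPoint W = weightedPoint W') : W = W' := by
  have hmem := K.inter_subset_convexHull hF hG
    ⟨hW.weightedPoint_mem_convexHull, hpoint ▸ hW'.weightedPoint_mem_convexHull⟩
  rw [← Finset.coe_inter] at hmem
  obtain ⟨U, hU, hUpoint⟩ := mem_convexHull_iff_exists_isBarycentric.1 hmem
  calc W = U := hW.eq_of_affineIndependent (K.indep hF) (hU.mono Finset.inter_subset_left)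
        hUpoint.symm
    _ = W' := (hU.mono Finset.inter_subset_right).eq_of_affineIndependent (K.indep hG) hW'
        (hUpoint.trans hpoint)

theorem IsBarycentric.weightedPoint_mem_space {K : SimplicialComplex ℝ E} (hF : F ∈ K.faces)
    (hW : IsBarycentric F W) : weightedPoint W ∈ K.space :=
  K.convexHull_subset_space hF hW.weightedPoint_mem_convexHull

end WeightedPoint

section Fold

variable {E : Type*} {ρ : Finset E} {v₀ a b : E} {u : (ρ → ℝ) × ℝ}

/-- Coordinates on the union of two simplices with common facet `insert v₀ ρ` and opposite vertices
`a` and `b`: `u.1` records the weights on `ρ`, and `u.2` is the weight of `a` or minus the weight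
of `b`, according to its sign. -/
noncomputable def foldWeights (ρ : Finset E) (v₀ a b : E) (u : (ρ → ℝ) × ℝ) : E →₀ ℝ :=
  ∑ v : ρ, single (v : E) (u.1 v) + single v₀ (1 - ∑ v, u.1 v - |u.2|) + single a u.2⁺ +
    single b u.2⁻

theorem foldWeights_swap (ρ : Finset E) (v₀ a b : E) (u : (ρ → ℝ) × ℝ) :
    foldWeights ρ v₀ a b u = foldWeights ρ v₀ b a (u.1, -u.2) := by
  simp [foldWeights, add_right_comm]

theorem foldWeights_apply (x : E) :
    foldWeights ρ v₀ a b u x = (if hx : x ∈ ρ then u.1 ⟨x, hx⟩ else 0) +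
      (if v₀ = x then 1 - ∑ v, u.1 v - |u.2| else 0) + (if a = x then u.2⁺ else 0) +
      (if b = x then u.2⁻ else 0) := by
  simp only [foldWeights, Finsupp.add_apply, finsetSum_apply, single_apply]
  congr
  split_ifs with hx
  · rw [Finset.sum_eq_single (⟨x, hx⟩ : ρ)] <;> simp +contextual [Subtype.ext_iff]
  · refine Finset.sum_eq_zero fun v _ => if_neg ?_
    rintro rfl
    exact hx v.2

/-- The coordinates of the points whose weights on the common facet `insert v₀ ρ` are positive. -/
def foldDomain (ρ : Finset E) : Set ((ρ → ℝ) × ℝ) :=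
  {u | (∀ v, 0 < u.1 v) ∧ 0 < 1 - ∑ v, u.1 v - |u.2|}

theorem isOpen_foldDomain (ρ : Finset E) : IsOpen (foldDomain ρ) := by
  refine isOpen_iff_mem_nhds.2 fun u hu => Filter.Eventually.and
    (Filter.eventually_all.2 fun v => ContinuousAt.eventually_lt ?_ ?_ (hu.1 v))
    (ContinuousAt.eventually_lt ?_ ?_ hu.2) <;> fun_prop

theorem isBarycentric_foldWeights_of_nonneg (hu : u ∈ foldDomain ρ) (hu2 : 0 ≤ u.2) :
    IsBarycentric (insert a (insert v₀ ρ)) (foldWeights ρ v₀ a b u) := by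
  refine ⟨fun x hx => ?_, fun x => ?_, ?_⟩
  · by_contra hmem
    simp only [Finset.mem_insert, not_or] at hmem
    refine mem_support_iff.1 hx ?_
    simp [foldWeights_apply, Ne.symm hmem.1, Ne.symm hmem.2.1, hmem.2.2,
      negPart_of_nonneg hu2]
  · have := posPart_nonneg u.2
    have := negPart_nonneg u.2
    have := hu.1
    have := hu.2
    rw [foldWeights_apply]
    grind
  · simp only [foldWeights, map_add, map_sum, linearCombination_single, smul_eq_mul, mul_one]
    linarith [posPart_add_negPart u.2]

theorem isBarycentric_foldWeights (hu : u ∈ foldDomain ρ) :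
    IsBarycentric (insert a (insert v₀ ρ)) (foldWeights ρ v₀ a b u) ∨
      IsBarycentric (insert b (insert v₀ ρ)) (foldWeights ρ v₀ a b u) := by
  rcases le_total 0 u.2 with hu2 | hu2
  · exact .inl (isBarycentric_foldWeights_of_nonneg hu hu2)
  · rw [foldWeights_swap]
    refine .inr (isBarycentric_foldWeights_of_nonneg ⟨hu.1, ?_⟩ (neg_nonneg.2 hu2))
    rw [abs_neg]
    exact hu.2

theorem foldWeights_injective (hv₀ : v₀ ∉ ρ) (ha : a ∉ insert v₀ ρ) (hb : b ∉ insert v₀ ρ)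
    (hab : a ≠ b) : Function.Injective (foldWeights ρ v₀ a b) := by
  simp only [Finset.mem_insert, not_or] at ha hb
  intro u u' h
  have happly := DFunLike.congr_fun h
  simp only [foldWeights_apply] at happly
  refine Prod.ext (funext fun v => ?_) ?_
  · have hne : v₀ ≠ v ∧ a ≠ v ∧ b ≠ v :=
      ⟨fun h => hv₀ (h ▸ v.2), fun h => ha.2 (h ▸ v.2), fun h => hb.2 (h ▸ v.2)⟩
    simpa [hne] using happly v
  · have hpos : u.2⁺ = u'.2⁺ := by simpa [ha, hab.symm, Ne.symm ha.1] using happly a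
    have hneg : u.2⁻ = u'.2⁻ := by simpa [hb, hab, Ne.symm hb.1] using happly b
    rw [← posPart_sub_negPart u.2, hpos, hneg, posPart_sub_negPart]

theorem foldWeights_of_isBarycentric (hv₀ : v₀ ∉ ρ) (ha : a ∉ insert v₀ ρ) {W : E →₀ ℝ}
    (hW : IsBarycentric (insert a (insert v₀ ρ)) W) :
    foldWeights ρ v₀ a b (fun v => W v, W a) = W := by
  have htotal := hW.sum_eq_one
  rw [Finset.sum_insert ha, Finset.sum_insert hv₀] at htotal
  simp only [Finset.mem_insert, not_or] at ha
  have hnonneg := hW.nonneg a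
  ext x
  rw [foldWeights_apply, Finset.sum_coe_sort ρ W, abs_of_nonneg hnonneg,
    posPart_of_nonneg hnonneg, negPart_of_nonneg hnonneg]
  have hzero := hW.apply_eq_zero (v := x)
  grind

theorem mem_foldDomain_of_isBarycentric (hv₀ : v₀ ∉ ρ) (ha : a ∉ insert v₀ ρ) {W : E →₀ ℝ}
    (hW : IsBarycentric (insert a (insert v₀ ρ)) W) (hpos : ∀ v ∈ insert v₀ ρ, 0 < W v) :
    ((fun v => W v, W a) : (ρ → ℝ) × ℝ) ∈ foldDomain ρ := by
  refine ⟨fun v => hpos v (Finset.mem_insert_of_mem v.2), ?_⟩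
  have htotal := hW.sum_eq_one
  rw [Finset.sum_insert ha, Finset.sum_insert hv₀] at htotal
  rw [Finset.sum_coe_sort ρ W, abs_of_nonneg (hW.nonneg a)]
  linarith [hpos v₀ (Finset.mem_insert_self _ _)]

theorem continuous_weightedPoint_foldWeights [AddCommGroup E] [Module ℝ E] [TopologicalSpace E]
    [ContinuousAdd E] [ContinuousSMul ℝ E] (ρ : Finset E) (v₀ a b : E) :
    Continuous fun u => weightedPoint (foldWeights ρ v₀ a b u) := by
  simp only [weightedPoint, foldWeights, map_add, map_sum, linearCombination_single, id_eq,
    posPart_def, negPart_def]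
  fun_prop

end Fold

theorem exists_erase_subset_of_card_le_succ {α : Type*} [DecidableEq α] {s t : Finset α}
    (hs : s.Nonempty) (hst : s ⊆ t) (hcard : t.card ≤ s.card + 1) :
    ∃ a ∈ t, t.erase a ⊆ s := by
  by_cases hts : t ⊆ s
  · obtain ⟨a, ha⟩ := hs
    exact ⟨a, hst ha, (Finset.erase_subset _ _).trans hts⟩
  · obtain ⟨a, hat, has⟩ := Finset.not_subset.1 hts
    refine ⟨a, hat, (Finset.eq_of_subset_of_card_le (Finset.subset_erase.2 ⟨hst, has⟩) ?_).ge⟩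
    rw [Finset.card_erase_of_mem hat]
    omega

section Adjacent

variable {E H : Type*} [NormedAddCommGroup E] [NormedSpace ℝ E] [NormedAddCommGroup H]
  [NormedSpace ℝ H] [FiniteDimensional ℝ H] [Nontrivial H] {K : SimplicialComplex ℝ E} {f : E → H}
  {τ : Finset E} {a b c : E}

theorem image_union_convexHull_mem_nhds (hf : ContinuousOn f K.space) (hinj : InjOn f K.space)
    (ha : a ∉ τ) (hb : b ∉ τ) (hab : a ≠ b) (hcard : τ.card = finrank ℝ H)
    (haK : insert a τ ∈ K.faces) (hbK : insert b τ ∈ K.faces) {W : E →₀ ℝ}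
    (hW : IsBarycentric (insert a τ) W) (hpos : ∀ v ∈ τ, 0 < W v) :
    f '' (convexHull ℝ ↑(insert a τ) ∪ convexHull ℝ ↑(insert b τ)) ∈ 𝓝 (f (weightedPoint W)) := by
  obtain ⟨v₀, hv₀⟩ : τ.Nonempty := Finset.card_pos.1 (hcard ▸ finrank_pos)
  obtain ⟨ρ, hv₀ρ, rfl⟩ : ∃ ρ, v₀ ∉ ρ ∧ τ = insert v₀ ρ :=
    ⟨τ.erase v₀, Finset.notMem_erase _ _, (Finset.insert_erase hv₀).symm⟩
  let u₀ : (ρ → ℝ) × ℝ := (fun v => W v, W a)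
  have hu₀ : foldWeights ρ v₀ a b u₀ = W := foldWeights_of_isBarycentric hv₀ρ ha hW
  have hs : foldDomain ρ ∈ 𝓝 u₀ :=
    (isOpen_foldDomain ρ).mem_nhds (mem_foldDomain_of_isBarycentric hv₀ρ ha hW hpos)
  have hface : ∀ u ∈ foldDomain ρ, ∃ F ∈ K.faces, IsBarycentric F (foldWeights ρ v₀ a b u) :=
    fun u hu => (isBarycentric_foldWeights hu).elim (⟨_, haK, ·⟩) (⟨_, hbK, ·⟩)
  have hspace : ∀ u ∈ foldDomain ρ, weightedPoint (foldWeights ρ v₀ a b u) ∈ K.space := by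
    intro u hu
    obtain ⟨F, hF, hFu⟩ := hface u hu
    exact hFu.weightedPoint_mem_space hF
  have hinjOn : InjOn (fun u => weightedPoint (foldWeights ρ v₀ a b u)) (foldDomain ρ) := by
    intro u hu u' hu' h
    obtain ⟨F, hF, hFu⟩ := hface u hu
    obtain ⟨G, hG, hGu'⟩ := hface u' hu'
    exact foldWeights_injective hv₀ρ ha hb hab (hFu.eq_of_mem_faces hF hG hGu' h)
  have hdim : finrank ℝ ((ρ → ℝ) × ℝ) = finrank ℝ H := by
    simp [← hcard, Finset.card_insert_of_notMem hv₀ρ]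
  have hnhds := image_mem_nhds_of_injOn hdim hs
    (hf.comp (continuous_weightedPoint_foldWeights ρ v₀ a b).continuousOn hspace)
    (hinj.comp hinjOn hspace)
  simp only [Function.comp_apply, hu₀] at hnhds
  refine Filter.mem_of_superset hnhds ?_
  rintro _ ⟨u, hu, rfl⟩
  exact mem_image_of_mem f ((isBarycentric_foldWeights hu).imp
    (·.weightedPoint_mem_convexHull) (·.weightedPoint_mem_convexHull))

theorem eq_or_eq_of_insert_mem_faces (hf : ContinuousOn f K.space) (hinj : InjOn f K.space)
    (ha : a ∉ τ) (hb : b ∉ τ) (hc : c ∉ τ) (hab : a ≠ b) (hcard : τ.card = finrank ℝ H)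
    (haK : insert a τ ∈ K.faces) (hbK : insert b τ ∈ K.faces) (hcK : insert c τ ∈ K.faces) :
    c = a ∨ c = b := by
  by_contra! hne
  obtain ⟨W, hW, hpos⟩ := exists_isBarycentric_pos (Finset.card_pos.1 (hcard ▸ finrank_pos))
  let p : ℝ → E := AffineMap.lineMap (weightedPoint W) c
  have hp : ∀ t, p t = weightedPoint (AffineMap.lineMap W (single c 1) t) := fun t => by
    simp [p, weightedPoint, AffineMap.lineMap_apply_module]
  have hpspace : ∀ t ∈ Icc (0 : ℝ) 1, p t ∈ K.space := fun t ht =>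
    hp t ▸ (hW.lineMap_single c ht).weightedPoint_mem_space hcK
  have hnotMem : ∀ q, q ≠ c → insert q τ ∈ K.faces → ∀ t ∈ Ioc (0 : ℝ) 1,
      p t ∉ convexHull ℝ (insert q τ : Finset E) := by
    intro q hqc hqK t ht hmem
    obtain ⟨U, hU, hUp⟩ := mem_convexHull_iff_exists_isBarycentric.1 hmem
    have hUc : U c = 0 := hU.apply_eq_zero (by simp [hqc.symm, hc])
    rw [hU.eq_of_mem_faces hqK hcK (hW.lineMap_single c (Ioc_subset_Icc_self ht))
      (hUp.trans (hp t))] at hUc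
    simp [AffineMap.lineMap_apply_module, hW.apply_eq_zero hc, ht.1.ne'] at hUc
  have hnhds := image_union_convexHull_mem_nhds hf hinj ha hb hab hcard haK hbK
    (hW.mono (Finset.subset_insert _ _)) hpos
  have htendsto : Filter.Tendsto (f ∘ p) (𝓝[Ioc 0 1] 0) (𝓝 (f (weightedPoint W))) := by
    have hcont : ContinuousOn (f ∘ p) (Icc 0 1) :=
      hf.comp AffineMap.lineMap_continuous.continuousOn hpspace
    simpa [p] using ((hcont 0 (by simp)).mono Ioc_subset_Icc_self).tendsto
  have : (𝓝[Ioc (0 : ℝ) 1] 0).NeBot := by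
    rw [nhdsWithin_Ioc_eq_nhdsGT one_pos]
    infer_instance
  obtain ⟨t, ⟨x, hx, hxt⟩, ht⟩ := ((htendsto.eventually hnhds).and self_mem_nhdsWithin).exists
  have hxspace : x ∈ K.space :=
    hx.elim (K.convexHull_subset_space haK ·) (K.convexHull_subset_space hbK ·)
  obtain rfl := hinj hxspace (hpspace t (Ioc_subset_Icc_self ht)) hxt
  exact hx.elim (hnotMem a hne.1.symm haK t ht) (hnotMem b hne.2.symm hbK t ht)

/- Off the faces of codimension at least two, a complex without free ridges is locally a union of
two adjacent simplices, which the homeomorphism onto the ball would map to a neighbourhood even of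
a point of the sphere. -/
theorem exists_erase_forall_insert_notMem_faces [FiniteDimensional ℝ E] (hfin : K.faces.Finite)
    {g : H → E} (hf : ContinuousOn f K.space) (hg : ContinuousOn g (closedBall 0 1))
    (hfmaps : MapsTo f K.space (closedBall 0 1)) (hgmaps : MapsTo g (closedBall 0 1) K.space)
    (hinv : InvOn g f K.space (closedBall 0 1))
    (hpure : ∀ σ ∈ K.faces, ∃ F ∈ K.faces, σ ⊆ F ∧ F.card = finrank ℝ H + 1) :
    ∃ F ∈ K.faces, F.card = finrank ℝ H + 1 ∧
      ∃ a ∈ F, ∀ b ∉ F, insert b (F.erase a) ∉ K.faces := by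
  by_contra! hclosed
  obtain ⟨z, hz, hzlow⟩ := exists_mem_sphere_notMem_convexHull (hg.mono sphere_subset_closedBall)
    (hinv.2.injOn.mono sphere_subset_closedBall)
    (hfin.countable.mono (sep_subset K.faces fun ρ => ρ.card < finrank ℝ H)) (fun ρ hρ => hρ.2)
  have hzball : z ∈ closedBall (0 : H) 1 := sphere_subset_closedBall hz
  obtain ⟨σ, hσ, hzσ⟩ := SimplicialComplex.mem_space_iff.1 (hgmaps hzball)
  obtain ⟨F, hF, hσF, hFcard⟩ := hpure σ hσ
  obtain ⟨W, hW, hWz⟩ := mem_convexHull_iff_exists_isBarycentric.1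
    (convexHull_mono (Finset.coe_subset.2 hσF) hzσ)
  have hsupport : finrank ℝ H ≤ W.support.card := not_lt.1 fun hlt =>
    hzlow _ ⟨K.down_closed hF hW.support_subset hW.support_nonempty, hlt⟩
      (hWz ▸ hW.support.weightedPoint_mem_convexHull)
  obtain ⟨a, haF, haW⟩ := exists_erase_subset_of_card_le_succ hW.support_nonempty
    hW.support_subset (by omega)
  obtain ⟨b, hbF, hbK⟩ := hclosed F hF hFcard a haF
  have hnhds := image_union_convexHull_mem_nhds hf hinv.1.injOn (Finset.notMem_erase a F)
    (fun h => hbF (Finset.mem_of_mem_erase h)) (ne_of_mem_of_not_mem haF hbF)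
    (by rw [Finset.card_erase_of_mem haF, hFcard, Nat.add_sub_cancel])
    (by rwa [Finset.insert_erase haF]) hbK (by rwa [Finset.insert_erase haF])
    fun v hv => (hW.nonneg v).lt_of_ne' (mem_support_iff.1 (haW hv))
  rw [hWz, hinv.2 hzball, Finset.insert_erase haF] at hnhds
  have hsub := (hfmaps.mono_left (union_subset (K.convexHull_subset_space hF)
    (K.convexHull_subset_space hbK))).image_subset
  have hzint : z ∈ interior (closedBall 0 1) :=
    mem_interior_iff_mem_nhds.2 (Filter.mem_of_superset hnhds hsub)
  rw [interior_closedBall _ one_ne_zero] at hzint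
  exact (mem_ball_zero_iff.1 hzint).ne (mem_sphere_zero_iff_norm.1 hz)

end Adjacent

end BarycentricWeights

/-! ### Unions of facets of a simplex -/

section UnionOfFacets

open Module Set Metric Finsupp

theorem exists_linearMap_map_eq_top_ker_inf_eq_span {k E H : Type*} [Field k] [AddCommGroup E]
    [Module k E] [AddCommGroup H] [Module k H] [FiniteDimensional k H] {M : Submodule k E}
    (hM : finrank k M = finrank k H + 1) {e : E} (he : e ∈ M) (hne : e ≠ 0) :
    ∃ P : E →ₗ[k] H, M.map P = ⊤ ∧ LinearMap.ker P ⊓ M = k ∙ e := by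
  have : FiniteDimensional k M := FiniteDimensional.of_finrank_pos (by omega)
  let e' : M := ⟨e, he⟩
  have hfinrank : finrank k (M ⧸ k ∙ e') = finrank k H := by
    have hquot := Submodule.finrank_quotient_add_finrank (k ∙ e')
    rw [finrank_span_singleton (show e' ≠ 0 from fun h => hne (congrArg Subtype.val h))] at hquot
    omega
  obtain ⟨L⟩ := FiniteDimensional.nonempty_linearEquiv_of_finrank_eq hfinrank
  obtain ⟨P, hP⟩ := LinearMap.exists_extend (L.toLinearMap ∘ₗ (k ∙ e').mkQ)
  refine ⟨P, ?_, ?_⟩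
  · rw [← LinearMap.range_domRestrict, LinearMap.domRestrict, hP]
    exact LinearMap.range_eq_top.2 (L.surjective.comp (Submodule.mkQ_surjective _))
  · have hker : LinearMap.ker (P ∘ₗ M.subtype) = k ∙ e' := by
      rw [hP, LinearEquiv.ker_comp, Submodule.ker_mkQ]
    rw [inf_comm, ← Submodule.map_comap_subtype, ← LinearMap.ker_comp, hker, Submodule.map_span,
      image_singleton, Submodule.subtype_apply]

theorem nonempty_homeomorph_closedBall_of_convex_image {α H : Type*} [TopologicalSpace α]
    [NormedAddCommGroup H] [NormedSpace ℝ H] {X : Set α} {f : α → H} (hX : IsCompact X)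
    (hf : ContinuousOn f X) (hinj : InjOn f X) (hconv : Convex ℝ (f '' X))
    (hinterior : (interior (f '' X)).Nonempty) : Nonempty (X ≃ₜ closedBall (0 : H) 1) := by
  have hcompact := hX.image_of_continuousOn hf
  obtain ⟨h, -, hclosure, -⟩ := exists_homeomorph_image_interior_closure_frontier_eq_unitBall hconv
    hinterior hcompact.isBounded
  rw [hcompact.isClosed.closure_eq] at hclosure
  have : CompactSpace X := isCompact_iff_compactSpace.1 hX
  have hemb : Topology.IsEmbedding (X.domRestrict f) :=
    (hf.domRestrict.isClosedEmbedding (injOn_iff_injective.1 hinj)).isEmbedding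
  exact ⟨((hemb.toHomeomorph.trans (.setCongr (range_domRestrict f X))).trans (h.image _)).trans
    (.setCongr hclosure)⟩

theorem interior_image_convexHull_nonempty {E H : Type*} [AddCommGroup E] [Module ℝ E]
    [NormedAddCommGroup H] [NormedSpace ℝ H] [FiniteDimensional ℝ H] (P : E →ₗ[ℝ] H) {s : Set E}
    (hs : s.Nonempty) (hP : (vectorSpan ℝ s).map P = ⊤) :
    (interior (P '' convexHull ℝ s)).Nonempty := by
  rw [P.image_convexHull, interior_convexHull_nonempty_iff_affineSpan_eq_top,
    AffineSubspace.affineSpan_eq_top_iff_vectorSpan_eq_top_of_nonempty _ _ _ (hs.image P), ← hP]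
  simpa using (P.toAffineMap.map_vectorSpan (s := s)).symm

section Weights

variable {E : Type*} {F C : Finset E} {U V w : E →₀ ℝ}

theorem mem_biUnion_convexHull_erase_iff [AddCommGroup E] [Module ℝ E] {x : E} :
    x ∈ ⋃ v ∈ C, convexHull ℝ (F.erase v : Set E) ↔
      ∃ U, IsBarycentric F U ∧ (∃ v ∈ C, U v = 0) ∧ weightedPoint U = x := by
  simp only [mem_iUnion, exists_prop]
  constructor
  · rintro ⟨v, hv, hx⟩
    obtain ⟨U, hU, rfl⟩ := mem_convexHull_iff_exists_isBarycentric.1 hx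
    exact ⟨U, hU.mono (Finset.erase_subset _ _), ⟨v, hv, hU.apply_eq_zero (by simp)⟩, rfl⟩
  · rintro ⟨U, hU, ⟨v, hv, hUv⟩, rfl⟩
    have hsupp := Finset.subset_erase.2 ⟨hU.support_subset, notMem_support_iff.2 hUv⟩
    exact ⟨v, hv, (hU.support.mono hsupp).weightedPoint_mem_convexHull⟩

theorem IsBarycentric.nonpos_of_sub_eq_smul (hV : IsBarycentric F V) (hw : ∀ v ∈ C, 0 < w v)
    (hU : ∃ v ∈ C, U v = 0) {t : ℝ} (h : U - V = t • w) : t ≤ 0 := by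
  obtain ⟨v, hv, hUv⟩ := hU
  have hval : U v - V v = t * w v := by simpa using DFunLike.congr_fun h v
  exact nonpos_of_mul_nonpos_left (by linarith [hV.nonneg v]) (hw v hv)

theorem IsBarycentric.exists_sub_smul_apply_eq_zero (hU : IsBarycentric F U) (hC : C.Nonempty)
    (hsupp : w.support ⊆ F) (htotal : linearCombination ℝ (fun _ => (1 : ℝ)) w = 0)
    (hpos : ∀ v ∈ C, 0 < w v) (hneg : ∀ v ∉ C, w v ≤ 0) :
    ∃ t : ℝ, IsBarycentric F (U - t • w) ∧ ∃ v ∈ C, (U - t • w) v = 0 := by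
  obtain ⟨v₁, hv₁, hmin⟩ := C.exists_min_image (fun v => U v / w v) hC
  have ht : 0 ≤ U v₁ / w v₁ := div_nonneg (hU.nonneg _) (hpos _ hv₁).le
  refine ⟨U v₁ / w v₁, ⟨?_, fun v => ?_, ?_⟩, v₁, hv₁, ?_⟩
  · exact support_sub.trans (Finset.union_subset hU.support_subset (support_smul.trans hsupp))
  · simp only [Finsupp.sub_apply, Finsupp.smul_apply, smul_eq_mul, sub_nonneg]
    by_cases hv : v ∈ C
    · exact (le_div_iff₀ (hpos v hv)).1 (hmin v hv)
    · exact (mul_nonpos_of_nonneg_of_nonpos ht (hneg v hv)).trans (hU.nonneg v)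
  · rw [map_sub, map_smul, htotal, hU.total_eq_one, smul_zero, sub_zero]
  · simp [div_mul_cancel₀ _ (hpos v₁ hv₁).ne']

theorem exists_weights_pos_iff_mem [AddCommGroup E] [Module ℝ E] (hCF : C ⊂ F) (hC : C.Nonempty) :
    ∃ w : E →₀ ℝ, w.support ⊆ F ∧ linearCombination ℝ (fun _ => (1 : ℝ)) w = 0 ∧
      (∀ v, 0 < w v ↔ v ∈ C) ∧ weightedPoint w ∈ vectorSpan ℝ (F : Set E) := by
  obtain ⟨W, hW, hWpos⟩ := exists_isBarycentric_pos hC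
  obtain ⟨W', hW', -⟩ := exists_isBarycentric_pos (Finset.sdiff_nonempty.2 hCF.not_subset)
  have hWF := hW.mono hCF.subset
  have hW'F := hW'.mono Finset.sdiff_subset
  refine ⟨W - W', support_sub.trans (Finset.union_subset hWF.support_subset hW'F.support_subset),
    ?_, fun v => ?_, ?_⟩
  · rw [map_sub, hW.total_eq_one, hW'.total_eq_one, sub_self]
  · rw [Finsupp.sub_apply, sub_pos]
    by_cases hv : v ∈ C
    · simpa [hv, hW'.apply_eq_zero (v := v) (by simp [hv])] using hWpos v hv
    · simpa [hv, hW.apply_eq_zero hv] using hW'.nonneg v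
  · rw [weightedPoint_sub]
    exact vsub_mem_vectorSpan_of_mem_affineSpan_of_mem_affineSpan
      (convexHull_subset_affineSpan _ hWF.weightedPoint_mem_convexHull)
      (convexHull_subset_affineSpan _ hW'F.weightedPoint_mem_convexHull)

end Weights

section Projection

variable {E H : Type*} [AddCommGroup E] [Module ℝ E] [AddCommGroup H] [Module ℝ H]
  {F C : Finset E} {w : E →₀ ℝ} {P : E →ₗ[ℝ] H}

theorem injOn_biUnion_convexHull_erase (hF : AffineIndependent ℝ ((↑) : F → E))
    (hsupp : w.support ⊆ F) (htotal : linearCombination ℝ (fun _ => (1 : ℝ)) w = 0)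
    (hpos : ∀ v ∈ C, 0 < w v)
    (hP : LinearMap.ker P ⊓ vectorSpan ℝ (F : Set E) ≤ ℝ ∙ weightedPoint w) :
    InjOn P (⋃ v ∈ C, convexHull ℝ (F.erase v : Set E)) := by
  intro x hx y hy hxy
  obtain ⟨U, hU, hUC, rfl⟩ := mem_biUnion_convexHull_erase_iff.1 hx
  obtain ⟨V, hV, hVC, rfl⟩ := mem_biUnion_convexHull_erase_iff.1 hy
  have hspan : weightedPoint U - weightedPoint V ∈ vectorSpan ℝ (F : Set E) :=
    vsub_mem_vectorSpan_of_mem_affineSpan_of_mem_affineSpan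
      (convexHull_subset_affineSpan _ hU.weightedPoint_mem_convexHull)
      (convexHull_subset_affineSpan _ hV.weightedPoint_mem_convexHull)
  obtain ⟨t, ht⟩ := Submodule.mem_span_singleton.1
    (hP ⟨LinearMap.sub_mem_ker_iff.2 hxy, hspan⟩)
  have hUV : U - V = t • w := by
    refine sub_eq_zero.1 (eq_zero_of_affineIndependent hF ?_ ?_ ?_)
    · exact support_sub.trans (Finset.union_subset (support_sub.trans (Finset.union_subset
        hU.support_subset hV.support_subset)) (support_smul.trans hsupp))
    · rw [map_sub, map_sub, map_smul, htotal, hU.total_eq_one, hV.total_eq_one, sub_self,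
        smul_zero, sub_zero]
    · rw [weightedPoint_sub, weightedPoint_sub, weightedPoint_smul, ht, sub_self]
  have ht_le : t ≤ 0 := hV.nonpos_of_sub_eq_smul hpos hUC hUV
  have ht_ge : -t ≤ 0 := hU.nonpos_of_sub_eq_smul hpos hVC (by rw [neg_smul, ← hUV, neg_sub])
  rw [show t = 0 by linarith, zero_smul] at hUV
  rw [sub_eq_zero.1 hUV]

theorem image_biUnion_convexHull_erase (hC : C.Nonempty) (hsupp : w.support ⊆ F)
    (htotal : linearCombination ℝ (fun _ => (1 : ℝ)) w = 0) (hw : ∀ v, 0 < w v ↔ v ∈ C)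
    (hP : P (weightedPoint w) = 0) :
    P '' (⋃ v ∈ C, convexHull ℝ (F.erase v : Set E)) = P '' convexHull ℝ (F : Set E) := by
  refine (image_mono (iUnion₂_subset fun v _ => convexHull_mono ?_)).antisymm ?_
  · exact Finset.coe_subset.2 (Finset.erase_subset v F)
  · rintro _ ⟨x, hx, rfl⟩
    obtain ⟨U, hU, rfl⟩ := mem_convexHull_iff_exists_isBarycentric.1 hx
    obtain ⟨t, hUt, hzero⟩ := hU.exists_sub_smul_apply_eq_zero hC hsupp htotal
      (fun v => (hw v).2) (fun v hv => not_lt.1 fun h => hv ((hw v).1 h))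
    refine ⟨_, mem_biUnion_convexHull_erase_iff.2 ⟨_, hUt, hzero, rfl⟩, ?_⟩
    rw [weightedPoint_sub, weightedPoint_smul, map_sub, map_smul, hP, smul_zero, sub_zero]

end Projection

/- Projecting the simplex along the line joining the barycentre of the complement of `C` to the
barycentre of `C` maps the union of the facets opposite to `C` bijectively onto the image of the
whole simplex. -/
theorem nonempty_homeomorph_biUnion_convexHull_erase {E H : Type*} [NormedAddCommGroup E]
    [NormedSpace ℝ E] [FiniteDimensional ℝ E] [NormedAddCommGroup H] [NormedSpace ℝ H]
    [FiniteDimensional ℝ H] {F C : Finset E} (hF : AffineIndependent ℝ ((↑) : F → E))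
    (hcard : F.card = finrank ℝ H + 2) (hCF : C ⊂ F) (hC : C.Nonempty) :
    Nonempty ((⋃ v ∈ C, convexHull ℝ (F.erase v : Set E)) ≃ₜ closedBall (0 : H) 1) := by
  obtain ⟨w, hsupp, htotal, hw, hwspan⟩ := exists_weights_pos_iff_mem hCF hC
  obtain ⟨c, hc⟩ := hC
  have hne : weightedPoint w ≠ 0 := fun h => by
    simpa [eq_zero_of_affineIndependent hF hsupp htotal h] using (hw c).2 hc
  have hdim : finrank ℝ (vectorSpan ℝ (F : Set E)) = finrank ℝ H + 1 := by
    rw [← hF.finrank_vectorSpan (n := finrank ℝ H + 1) (by rw [Fintype.card_coe, hcard]),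
      Subtype.range_coe_subtype]
    rfl
  obtain ⟨P, hPtop, hPker⟩ := exists_linearMap_map_eq_top_ker_inf_eq_span hdim hwspan hne
  have hPw : P (weightedPoint w) = 0 :=
    (hPker.ge (Submodule.mem_span_singleton_self (weightedPoint w))).1
  have himage := image_biUnion_convexHull_erase ⟨c, hc⟩ hsupp htotal hw hPw
  refine nonempty_homeomorph_closedBall_of_convex_image (f := P)
    (C.isCompact_biUnion fun v _ => (Finset.finite_toSet _).isCompact_convexHull ℝ)
    P.continuous_of_finiteDimensional.continuousOn
    (injOn_biUnion_convexHull_erase hF hsupp htotal (fun v => (hw v).2) hPker.le) ?_ ?_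
  · rw [himage]
    exact (convex_convexHull ℝ _).linear_image P
  · rw [himage]
    exact interior_image_convexHull_nonempty P ⟨c, hCF.subset hc⟩ hPtop

end UnionOfFacets

/-! ### Shellings and their mod 2 chains -/

section Shelling

open Finset
open scoped symmDiff

variable {d : ℕ} {F G A σ σ' ρ τ : Finset V} {L l : List (Finset V)}
  {z : Finset (Finset V)}

/-- `A` is the restriction face of the simplex `F` over the complex generated by `L`: the unique
minimal face of `F` that is not a face of that complex. -/
structure IsRestriction (F : Finset V) (L : List (Finset V)) (A : Finset V) : Prop where
  subset : A ⊆ F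
  exists_subset_iff : ∀ σ ⊆ F, (∃ G ∈ L, σ ⊆ G) ↔ ¬ A ⊆ σ

theorem IsRestriction.notMem (hA : IsRestriction F L A) : F ∉ L := fun hF =>
  (hA.exists_subset_iff F subset_rfl).1 ⟨F, hF, subset_rfl⟩ hA.subset

theorem IsRestriction.eq_of_subset (hA : IsRestriction F L A) (hρF : ρ ⊆ F) (hAρ : A ⊆ ρ)
    (hG : G ∈ F :: L) (hρG : ρ ⊆ G) : G = F :=
  (List.mem_cons.1 hG).resolve_right fun hGL =>
    (hA.exists_subset_iff ρ hρF).1 ⟨G, hGL, hρG⟩ hAρ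

/-- A list of `d`-simplices, in the order in which they are removed, each of which meets the
complex generated by the later ones in the faces that do not contain its restriction face. -/
def IsShelling (d : ℕ) (l : List (Finset V)) : Prop :=
  ∀ F L, F :: L <:+ l → #F = d + 1 ∧ ∃ A, IsRestriction F L A

theorem IsShelling.of_suffix (hl : IsShelling d l) (hL : L <:+ l) : IsShelling d L :=
  fun F M hM => hl F M (hM.trans hL)

theorem IsShelling.of_cons (hl : IsShelling d (F :: L)) : IsShelling d L :=
  hl.of_suffix (List.suffix_cons F L)

theorem IsShelling.mem_of_forall_ridge_mem (hl : IsShelling d l) {S : Set (Finset V)}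
    (hS : ∀ G ∈ l, ∀ G' ∈ l, ∀ σ, #σ = d → τ ⊆ σ → σ ⊆ G → σ ⊆ G' → G ∈ S → G' ∈ S)
    (hne : ∃ G ∈ l, τ ⊆ G ∧ G ∈ S) : ∀ G ∈ l, τ ⊆ G → G ∈ S := by
  induction l with
  | nil => simp
  | cons F L ih =>
    have ih := ih hl.of_cons fun G hG G' hG' => hS G (.tail F hG) G' (.tail F hG')
    obtain ⟨hF, A, hA⟩ := hl F L List.suffix_rfl
    by_cases hτ : τ ⊆ F ∧ ∃ G ∈ L, τ ⊆ G
    · obtain ⟨hτF, hτL⟩ := hτ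
      obtain ⟨a, haA, haτ⟩ := not_subset.1 ((hA.exists_subset_iff τ hτF).1 hτL)
      obtain ⟨G', hG', haG'⟩ := (hA.exists_subset_iff (F.erase a) (erase_subset a F)).2
        fun h => notMem_erase a F (h haA)
      have ha : #(F.erase a) = d := by
        rw [card_erase_of_mem (hA.subset haA), hF, Nat.add_sub_cancel]
      have hτa : τ ⊆ F.erase a := subset_erase.2 ⟨hτF, haτ⟩
      have hFG' : F ∈ S ↔ G' ∈ S :=
        ⟨hS F (.head L) G' (.tail F hG') _ ha hτa (erase_subset a F) haG',
          hS G' (.tail F hG') F (.head L) _ ha hτa haG' (erase_subset a F)⟩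
      have hL : ∀ G ∈ L, τ ⊆ G → G ∈ S := by
        refine ih ?_
        obtain ⟨G, hG, hτG, hGS⟩ := hne
        rcases List.mem_cons.1 hG with rfl | hGL
        · exact ⟨G', hG', hτa.trans haG', hFG'.1 hGS⟩
        · exact ⟨G, hGL, hτG, hGS⟩
      simpa using ⟨fun _ => hFG'.2 (hL G' hG' (hτa.trans haG')), hL⟩
    · obtain ⟨G₀, hG₀, hτG₀, hG₀S⟩ := hne
      intro G hG hτG
      rcases List.mem_cons.1 hG with rfl | hGL <;> rcases List.mem_cons.1 hG₀ with rfl | hG₀L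
      · exact hG₀S
      · exact absurd ⟨hτG, G₀, hG₀L, hτG₀⟩ hτ
      · exact absurd ⟨hτG₀, G, hGL, hτG⟩ hτ
      · exact ih ⟨G₀, hG₀L, hτG₀, hG₀S⟩ G hGL hτG

/-- Every ridge, that is a set with `d` elements, lies in at most two members of `S`. -/
def IsThin (d : ℕ) (S : Set (Finset V)) : Prop :=
  ∀ σ, #σ = d → ∀ G₁ ∈ S, ∀ G₂ ∈ S, ∀ G₃ ∈ S, σ ⊆ G₁ → σ ⊆ G₂ → σ ⊆ G₃ →
    G₁ = G₂ ∨ G₁ = G₃ ∨ G₂ = G₃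

theorem IsThin.mono {S T : Set (Finset V)} (hT : IsThin d T) (hST : S ⊆ T) : IsThin d S :=
  fun σ hσ G₁ h₁ G₂ h₂ G₃ h₃ => hT σ hσ G₁ (hST h₁) G₂ (hST h₂) G₃ (hST h₃)

/-- No ridge containing `τ` lies in exactly one member of `S`. -/
def HasNoFreeRidge (d : ℕ) (τ : Finset V) (S : Set (Finset V)) : Prop :=
  ∀ σ, #σ = d → τ ⊆ σ → ∀ G ∈ S, σ ⊆ G → ∃ G' ∈ S, G' ≠ G ∧ σ ⊆ G'

theorem IsShelling.mem_of_hasNoFreeRidge (hl : IsShelling d l) (hthin : IsThin d {G | G ∈ l})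
    {S : Set (Finset V)} (hSl : ∀ G ∈ S, G ∈ l) (hS : HasNoFreeRidge d τ S)
    (hne : ∃ G ∈ S, τ ⊆ G) : ∀ G ∈ l, τ ⊆ G → G ∈ S := by
  obtain ⟨G₀, hG₀, hτG₀⟩ := hne
  refine hl.mem_of_forall_ridge_mem ?_ ⟨G₀, hSl G₀ hG₀, hτG₀, hG₀⟩
  intro G hG G' hG' σ hσ hτσ hσG hσG' hGS
  obtain ⟨G₁, hG₁, hne, hσG₁⟩ := hS σ hσ hτσ G hGS hσG
  rcases hthin σ hσ G hG G' hG' G₁ (hSl G₁ hG₁) hσG hσG' hσG₁ with h | h | h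
  · exact h ▸ hGS
  · exact absurd h.symm hne
  · exact h ▸ hG₁

theorem even_card_filter_symmDiff {α : Type*} [DecidableEq α] (p : α → Prop) [DecidablePred p]
    (s t : Finset α) :
    Even #{x ∈ s ∆ t | p x} ↔ (Even #{x ∈ s | p x} ↔ Even #{x ∈ t | p x}) := by
  have hfilter : {x ∈ s ∆ t | p x} = {x ∈ s | p x} ∆ {x ∈ t | p x} := by grind [mem_symmDiff]
  rw [hfilter, symmDiff_def, sup_eq_union, card_union_of_disjoint disjoint_sdiff_sdiff,
    ← card_sdiff_add_card_inter {x ∈ s | p x} {x ∈ t | p x},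
    ← card_sdiff_add_card_inter {x ∈ t | p x} {x ∈ s | p x}, inter_comm {x ∈ t | p x}]
  grind

theorem even_card_filter_insert {α : Type*} [DecidableEq α] (p : α → Prop) [DecidablePred p]
    {a : α} {s : Finset α} (ha : a ∉ s) :
    Even #{x ∈ insert a s | p x} ↔ (p a ↔ ¬ Even #{x ∈ s | p x}) := by
  rw [filter_insert]
  split_ifs with hpa
  · rw [card_insert_of_notMem (by simp [ha]), Nat.even_add_one]
    tauto
  · tauto

/-- The boundary of the simplex `F` relative to its face `τ`: the facets of `F` containing `τ`. -/
noncomputable def starBoundary (F τ : Finset V) : Finset (Finset V) :=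
  (F \ τ).image F.erase

theorem mem_starBoundary : σ ∈ starBoundary F τ ↔ ∃ v ∈ F \ τ, F.erase v = σ :=
  mem_image

theorem mem_starBoundary_iff (hF : #F = d + 1) (hτF : τ ⊆ F) :
    σ ∈ starBoundary F τ ↔ σ ⊆ F ∧ #σ = d ∧ τ ⊆ σ := by
  rw [mem_starBoundary]
  constructor
  · rintro ⟨v, hv, rfl⟩
    obtain ⟨hvF, hvτ⟩ := mem_sdiff.1 hv
    exact ⟨erase_subset v F, by rw [card_erase_of_mem hvF, hF, Nat.add_sub_cancel],
      subset_erase.2 ⟨hτF, hvτ⟩⟩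
  · rintro ⟨hσF, hσ, hτσ⟩
    obtain ⟨v, hvσ, rfl⟩ := exists_eq_insert_iff.2 ⟨hσF, by rw [hσ, hF]⟩
    exact ⟨v, mem_sdiff.2 ⟨mem_insert_self v σ, fun hvτ => hvσ (hτσ hvτ)⟩, erase_insert hvσ⟩

/-- A mod 2 cycle of `(d - 1)`-simplices in the star of `τ`, relative to the simplices that do not
contain `τ`. -/
structure IsStarCycle (d : ℕ) (τ : Finset V) (z : Finset (Finset V)) : Prop where
  card_eq : ∀ σ ∈ z, #σ = d
  subset : ∀ σ ∈ z, τ ⊆ σ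
  even_card : ∀ ρ, τ ⊆ ρ → #ρ + 1 = d → Even #{σ ∈ z | ρ ⊆ σ}

theorem isStarCycle_starBoundary (hF : #F = d + 1) (hτF : τ ⊆ F) :
    IsStarCycle d τ (starBoundary F τ) where
  card_eq σ hσ := ((mem_starBoundary_iff hF hτF).1 hσ).2.1
  subset σ hσ := ((mem_starBoundary_iff hF hτF).1 hσ).2.2
  even_card ρ hτρ hρ := by
    by_cases hρF : ρ ⊆ F
    · have hfilter : {σ ∈ starBoundary F τ | ρ ⊆ σ} = starBoundary F ρ := by
        ext σ
        rw [mem_filter, mem_starBoundary_iff hF hτF, mem_starBoundary_iff hF hρF]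
        exact ⟨fun h => ⟨h.1.1, h.1.2.1, h.2⟩, fun h => ⟨⟨h.1, h.2.1, hτρ.trans h.2.2⟩, h.2.2⟩⟩
      rw [hfilter, starBoundary, card_image_of_injOn (F.erase_injOn.mono (by simp)),
        card_sdiff_of_subset hρF, show #F - #ρ = 2 by omega]
      exact even_two
    · rw [filter_false_of_mem fun σ hσ hρσ =>
        hρF (hρσ.trans ((mem_starBoundary_iff hF hτF).1 hσ).1)]
      exact Even.zero

theorem IsStarCycle.symmDiff {w : Finset (Finset V)} (hz : IsStarCycle d τ z)
    (hw : IsStarCycle d τ w) : IsStarCycle d τ (z ∆ w) where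
  card_eq σ hσ := (mem_symmDiff.1 hσ).elim (fun h => hz.card_eq σ h.1) fun h => hw.card_eq σ h.1
  subset σ hσ := (mem_symmDiff.1 hσ).elim (fun h => hz.subset σ h.1) fun h => hw.subset σ h.1
  even_card ρ hτρ hρ := (even_card_filter_symmDiff _ _ _).2
    (iff_of_true (hz.even_card ρ hτρ hρ) (hw.even_card ρ hτρ hρ))

/- Two facets of `F` containing the restriction face meet in a codimension two face whose only
cofaces of dimension `d - 1` are these two facets, so a cycle contains both or neither. -/
theorem IsStarCycle.mem_of_mem (hz : IsStarCycle d τ z) (hzl : ∀ σ ∈ z, ∃ G ∈ F :: L, σ ⊆ G)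
    (hA : IsRestriction F L A) (hF : #F = d + 1) (hσ : σ ∈ z) (hσF : σ ⊆ F) (hAσ : A ⊆ σ)
    (hσ' : σ' ∈ starBoundary F τ) (hAσ' : A ⊆ σ') : σ' ∈ z := by
  have hτF : τ ⊆ F := (hz.subset σ hσ).trans hσF
  by_contra hσ'z
  obtain ⟨u, hu, rfl⟩ := mem_starBoundary.1
    ((mem_starBoundary_iff hF hτF).2 ⟨hσF, hz.card_eq σ hσ, hz.subset σ hσ⟩)
  obtain ⟨v, hv, rfl⟩ := mem_starBoundary.1 hσ'
  have hvu : v ≠ u := fun h => hσ'z (h ▸ hσ)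
  have hv_mem : v ∈ F.erase u := mem_erase.2 ⟨hvu, (mem_sdiff.1 hv).1⟩
  let ρ := (F.erase u).erase v
  have hρF : ρ ⊆ F := (erase_subset _ _).trans (erase_subset _ _)
  have hAρ : A ⊆ ρ := subset_erase.2 ⟨hAσ, (subset_erase.1 hAσ').2⟩
  have hτρ : τ ⊆ ρ := subset_erase.2 ⟨hz.subset _ hσ, (mem_sdiff.1 hv).2⟩
  have hρ : #ρ + 1 = d := by rw [card_erase_add_one hv_mem, hz.card_eq _ hσ]
  have hfilter : {σ ∈ z | ρ ⊆ σ} = {F.erase u} := by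
    refine eq_singleton_iff_unique_mem.2 ⟨mem_filter.2 ⟨hσ, erase_subset _ _⟩, fun σ hσρ => ?_⟩
    obtain ⟨hσz, hρσ⟩ := mem_filter.1 hσρ
    obtain ⟨G, hG, hσG⟩ := hzl σ hσz
    obtain rfl := hA.eq_of_subset hρF hAρ hG (hρσ.trans hσG)
    obtain ⟨w, hw, rfl⟩ := mem_starBoundary.1
      ((mem_starBoundary_iff hF hρF).2 ⟨hσG, hz.card_eq σ hσz, hρσ⟩)
    have hwv : w ≠ v := fun h => hσ'z (h ▸ hσz)
    have hwu : w = u := by grind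
    rw [hwu]
  simpa [hfilter] using hz.even_card ρ hτρ hρ

/-- `z` is the mod 2 boundary of the chain `c` in the star of `τ`. -/
def IsStarBoundaryOf (d : ℕ) (τ : Finset V) (z c : Finset (Finset V)) : Prop :=
  ∀ σ, τ ⊆ σ → #σ = d → (σ ∈ z ↔ ¬ Even #{G ∈ c | σ ⊆ G})

theorem IsStarBoundaryOf.insert {c : Finset (Finset V)} (hc : IsStarBoundaryOf d τ z c)
    (hF : #F = d + 1) (hτF : τ ⊆ F) (hFc : F ∉ c) :
    IsStarBoundaryOf d τ (z ∆ starBoundary F τ) (insert F c) := by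
  intro σ hτσ hσ
  rw [even_card_filter_insert _ hFc, mem_symmDiff, mem_starBoundary_iff hF hτF, hc σ hτσ hσ]
  tauto

theorem IsStarCycle.exists_isStarBoundaryOf (hL : IsShelling d L) (hz : IsStarCycle d τ z)
    (hzL : ∀ σ ∈ z, ∃ G ∈ L, σ ⊆ G) :
    ∃ c : Finset (Finset V), (∀ G ∈ c, G ∈ L) ∧ IsStarBoundaryOf d τ z c := by
  induction L generalizing z with
  | nil =>
    refine ⟨∅, by simp, fun σ _ _ => ?_⟩
    simpa using hzL σ
  | cons F L ih =>
    obtain ⟨hF, A, hA⟩ := hL F L List.suffix_rfl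
    by_cases hcase : ∃ σ ∈ z, σ ⊆ F ∧ A ⊆ σ
    · obtain ⟨σ, hσ, hσF, hAσ⟩ := hcase
      have hτF : τ ⊆ F := (hz.subset σ hσ).trans hσF
      have hcycle := hz.symmDiff (isStarCycle_starBoundary hF hτF)
      obtain ⟨c, hcL, hc⟩ := ih hL.of_cons hcycle fun σ' hσ' => by
        rcases mem_symmDiff.1 hσ' with ⟨hσ'z, hσ'F⟩ | ⟨hσ'F, hσ'z⟩
        · obtain ⟨G, hG, hσ'G⟩ := hzL σ' hσ'z
          refine ⟨G, (List.mem_cons.1 hG).resolve_left fun hGF => hσ'F ?_, hσ'G⟩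
          exact (mem_starBoundary_iff hF hτF).2
            ⟨hGF ▸ hσ'G, hz.card_eq σ' hσ'z, hz.subset σ' hσ'z⟩
        · exact (hA.exists_subset_iff σ' ((mem_starBoundary_iff hF hτF).1 hσ'F).1).2
            fun hAσ' => hσ'z (hz.mem_of_mem hzL hA hF hσ hσF hAσ hσ'F hAσ')
      refine ⟨insert F c, ?_, ?_⟩
      · simpa using fun G hG => Or.inr (hcL G hG)
      · simpa using hc.insert hF hτF fun hFc => hA.notMem (hcL F hFc)
    · obtain ⟨c, hcL, hc⟩ := ih hL.of_cons hz fun σ hσ => by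
        obtain ⟨G, hG, hσG⟩ := hzL σ hσ
        rcases List.mem_cons.1 hG with rfl | hGL
        · exact (hA.exists_subset_iff σ hσG).2 fun hAσ => hcase ⟨σ, hσ, hσG, hAσ⟩
        · exact ⟨G, hGL, hσG⟩
      exact ⟨c, fun G hG => List.mem_cons_of_mem F (hcL G hG), hc⟩

theorem hasNoFreeRidge_of_even_card {c : Finset (Finset V)}
    (hc : ∀ σ, τ ⊆ σ → #σ = d → Even #{G ∈ c | σ ⊆ G}) :
    HasNoFreeRidge d τ (c : Set (Finset V)) := by
  intro σ hσ hτσ G hG hσG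
  by_contra! hunique
  have hfilter : {G ∈ c | σ ⊆ G} = {G} := by
    refine eq_singleton_iff_unique_mem.2 ⟨mem_filter.2 ⟨hG, hσG⟩, fun G' hG' => ?_⟩
    by_contra hne
    exact hunique G' (mem_filter.1 hG').1 hne (mem_filter.1 hG').2
  simpa [hfilter] using hc σ hτσ hσ

/- The facets of `F` containing `F \ A` form a cycle carried by `L`; a chain in `L` with the same
boundary closes up with `F` and, by thinness and connectedness, is all of the star of `F \ A`. -/
theorem IsRestriction.hasNoFreeRidge (hA : IsRestriction F L A) (hl : IsShelling d (F :: L))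
    (hthin : IsThin d {G | G ∈ F :: L}) : HasNoFreeRidge d (F \ A) {G | G ∈ F :: L} := by
  have hF : #F = d + 1 := (hl F L List.suffix_rfl).1
  have hcarried : ∀ σ ∈ starBoundary F (F \ A), ∃ G ∈ L, σ ⊆ G := by
    intro σ hσ
    obtain ⟨v, hv, rfl⟩ := mem_starBoundary.1 hσ
    refine (hA.exists_subset_iff _ (erase_subset v F)).2 fun hAσ => ?_
    exact absurd (hAσ (by grind : v ∈ A)) (notMem_erase v F)
  obtain ⟨c, hcL, hc⟩ := (isStarCycle_starBoundary hF sdiff_subset).exists_isStarBoundaryOf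
    hl.of_cons hcarried
  have hclosed : IsStarBoundaryOf d (F \ A) ∅ (insert F c) := by
    simpa using hc.insert hF sdiff_subset fun hFc => hA.notMem (hcL F hFc)
  have hno : HasNoFreeRidge d (F \ A) (insert F c : Finset (Finset V)) :=
    hasNoFreeRidge_of_even_card fun σ hτσ hσ => by simpa using hclosed σ hτσ hσ
  have hcl : ∀ G ∈ (insert F c : Finset (Finset V)), G ∈ F :: L := by
    simpa using fun G hG => Or.inr (hcL G hG)
  have hstar := hl.mem_of_hasNoFreeRidge hthin hcl hno ⟨F, mem_insert_self F c, sdiff_subset⟩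
  intro σ hσ hτσ G hG hσG
  obtain ⟨G', hG', hne, hσG'⟩ := hno σ hσ hτσ G (hstar G hG (hτσ.trans hσG)) hσG
  exact ⟨G', hcl G' hG', hne, hσG'⟩

theorem IsRestriction.ssubset (hA : IsRestriction F L A) (hl : IsShelling d l)
    (hthin : IsThin d {G | G ∈ l}) (hfree : ¬ HasNoFreeRidge d ∅ {G | G ∈ l})
    (hsuffix : F :: L <:+ l) : A ⊂ F := by
  refine hA.subset.ssubset_of_ne fun hAF => hfree ?_
  have hsub : {G | G ∈ F :: L} ⊆ {G | G ∈ l} := fun G hG => hsuffix.mem hG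
  have hno := hA.hasNoFreeRidge (hl.of_suffix hsuffix) (hthin.mono hsub)
  rw [hAF, sdiff_self] at hno
  have hall : ∀ G ∈ l, ∅ ⊆ G → G ∈ {G | G ∈ F :: L} :=
    hl.mem_of_hasNoFreeRidge hthin hsub hno ⟨F, List.mem_cons_self, empty_subset F⟩
  rwa [hsub.antisymm fun G hG => hall G hG (empty_subset G)] at hno

end Shelling

/-! ### Shellings down of triangulated balls -/

section ShellingDown

open Finset

variable {K : Set (Finset V)} {d i k n : ℕ} {F A σ τ : Finset V} {L l : List (Finset V)}

theorem exists_isFacet_superset (hK : K.Finite) (hσ : σ ∈ K) : ∃ F, IsFacet K F ∧ σ ⊆ F := by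
  obtain ⟨F, hσF, hF⟩ := hK.exists_le_maximal hσ
  exact ⟨F, ⟨hF.prop, fun τ hτ hFτ => hF.eq_of_le hτ hFτ⟩, hσF⟩

theorem PureDim.isFacet_iff (hpure : PureDim K d) (hK : K.Finite) :
    IsFacet K F ↔ F ∈ K ∧ #F = d + 1 := by
  refine ⟨fun hF => ⟨hF.1, hpure.2 F hF⟩, fun ⟨hF, hcard⟩ => ?_⟩
  obtain ⟨G, hG, hFG⟩ := exists_isFacet_superset hK hF
  rwa [eq_of_subset_of_card_le hFG (by rw [hcard, hpure.2 G hG])]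

theorem exists_isRestriction_of_pureDim (hK : K.Finite)
    (hdown : ∀ F ∈ K, ∀ σ ⊆ F, σ.Nonempty → σ ∈ K) (hFK : F ∈ K) (hF : #F = n + 2)
    (hpure : PureDim (generatedByL K [F] ∩ generatedByL K L) n) : ∃ A, IsRestriction F L A := by
  refine ⟨{a ∈ F | ∃ G ∈ L, F.erase a ⊆ G}, filter_subset _ _, fun σ hσF => ⟨?_, fun hAσ => ?_⟩⟩
  · rintro ⟨G, hG, hσG⟩ hAσ
    obtain ⟨σ', hσ', hσσ'⟩ : ∃ σ' ∈ generatedByL K [F] ∩ generatedByL K L, σ ⊆ σ' := by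
      rcases σ.eq_empty_or_nonempty with rfl | hne
      · exact hpure.1.imp fun σ' hσ' => ⟨hσ', empty_subset σ'⟩
      · have hσK := hdown F hFK σ hσF hne
        exact ⟨σ, ⟨⟨hσK, F, List.mem_singleton_self F, hσF⟩, hσK, G, hG, hσG⟩, subset_rfl⟩
    obtain ⟨μ, hμ, hσ'μ⟩ := exists_isFacet_superset (hK.subset fun _ h => h.1.1) hσ'
    obtain ⟨⟨-, F', hF', hμF⟩, -, G', hG', hμG'⟩ := hμ.1
    obtain rfl := List.mem_singleton.1 hF'
    obtain ⟨a, haμ, rfl⟩ := exists_eq_insert_iff.2 ⟨hμF, by rw [hpure.2 μ hμ, hF]⟩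
    have haA : a ∈ ({b ∈ insert a μ | ∃ G ∈ L, (insert a μ).erase b ⊆ G} : Finset V) :=
      mem_filter.2 ⟨mem_insert_self a μ, G', hG', by rwa [erase_insert haμ]⟩
    exact haμ (hσ'μ (hσσ' (hAσ haA)))
  · obtain ⟨a, haA, haσ⟩ := not_subset.1 hAσ
    obtain ⟨-, G, hG, haG⟩ := mem_filter.1 haA
    exact ⟨G, hG, (subset_erase.2 ⟨hσF, haσ⟩).trans haG⟩

theorem IsShellingDown.isShelling (hl : IsShellingDown K (n + 1) l (l.length - 1)) (hK : K.Finite)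
    (hdown : ∀ F ∈ K, ∀ σ ⊆ F, σ.Nonempty → σ ∈ K) (hpure : PureDim K (n + 1)) :
    IsShelling (n + 1) l := by
  intro F L hFL
  have hF := (hl.2.1 F).1 (hFL.mem List.mem_cons_self)
  have hcard := hpure.2 F hF
  refine ⟨hcard, ?_⟩
  obtain ⟨t, rfl⟩ := hFL
  rcases L.eq_nil_or_concat with rfl | ⟨_, _, rfl⟩
  · exact ⟨∅, empty_subset F, by simp⟩
  · refine exists_isRestriction_of_pureDim hK hdown hF.1 hcard ?_
    simpa using hl.2.2.2 t.length (by simp)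

theorem IsShellingDown.dim_ne_zero (hl : IsShellingDown K d l k) (hpure : PureDim K d)
    (hne : ∀ σ ∈ K, σ.Nonempty) (hi : i < k) : d ≠ 0 := by
  rintro rfl
  obtain ⟨hnodup, hmem, hk, hsteps⟩ := hl
  have hil : i < l.length := by omega
  have hstep := (hsteps i hi).1
  have hnodup := hnodup.sublist (List.drop_sublist i l)
  rw [List.getD_eq_getElem _ _ hil] at hstep
  rw [List.drop_eq_getElem_cons hil] at hnodup
  obtain ⟨σ, ⟨hσ, F, hF, hσF⟩, -, G, hG, hσG⟩ := hstep
  obtain rfl := List.mem_singleton.1 hF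
  have eq_of_subset : ∀ G ∈ l, σ ⊆ G → σ = G := fun G hG hσG =>
    eq_of_subset_of_card_le hσG
      ((hpure.2 G ((hmem G).1 hG)).trans_le (card_pos.2 (hne σ hσ)))
  have hFG : l[i] = G := (eq_of_subset _ (l.getElem_mem hil) hσF).symm.trans
    (eq_of_subset G (List.mem_of_mem_drop hG) hσG)
  exact (List.nodup_cons.1 hnodup).1 (hFG ▸ hG)

theorem IsRestriction.nonempty (hA : IsRestriction F L A) (hL : L ≠ []) : A.Nonempty := by
  obtain ⟨G, hG⟩ := List.exists_mem_of_ne_nil L hL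
  obtain ⟨a, ha, -⟩ := not_subset.1
    ((hA.exists_subset_iff ∅ (empty_subset F)).1 ⟨G, hG, empty_subset G⟩)
  exact ⟨a, ha⟩

theorem HasNoFreeRidge.not_subset_of_mem_bdry (hl : HasNoFreeRidge d τ {G | G ∈ l})
    (hlK : ∀ G ∈ l, G ∈ K) (hcard : ∀ G ∈ l, #G = d + 1)
    (hσ : σ ∈ bdry (generatedByL K l) d) : ¬ τ ⊆ σ := by
  obtain ⟨-, ρ, ⟨⟨-, G, hG, hρG⟩, hρ, hunique⟩, hσρ⟩ := hσ
  intro hτσ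
  obtain ⟨G', hG', hne, hρG'⟩ := hl ρ hρ (hτσ.trans hσρ) G hG hρG
  have hgen : ∀ G ∈ l, G ∈ generatedByL K l := fun G hG => ⟨hlK G hG, G, hG, subset_rfl⟩
  exact hne (hunique.unique ⟨hgen G' hG', hcard G' hG', hρG'⟩ ⟨hgen G hG, hcard G hG, hρG⟩)

theorem IsRestriction.erase_mem_bdry (hA : IsRestriction F L A) (hFK : F ∈ K)
    (hcard : ∀ G ∈ F :: L, #G = d + 1) {v : V} (hv : v ∈ F \ A) (hvK : F.erase v ∈ K) :
    F.erase v ∈ bdry (generatedByL K (F :: L)) d := by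
  obtain ⟨hvF, hvA⟩ := mem_sdiff.1 hv
  have hF := hcard F List.mem_cons_self
  have hgen : F.erase v ∈ generatedByL K (F :: L) :=
    ⟨hvK, F, List.mem_cons_self, erase_subset v F⟩
  refine ⟨hgen, F.erase v, ⟨hgen, ?_, F, ⟨⟨hFK, F, List.mem_cons_self, subset_rfl⟩, hF,
    erase_subset v F⟩, ?_⟩, subset_rfl⟩
  · rw [card_erase_of_mem hvF, hF, Nat.add_sub_cancel]
  · rintro G ⟨⟨-, G', hG', hGG'⟩, hG, hvG⟩
    obtain rfl := eq_of_subset_of_card_le hGG' (by rw [hcard G' hG', hG])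
    exact hA.eq_of_subset (erase_subset v F) (subset_erase.2 ⟨hA.subset, hvA⟩) hG' hvG

theorem IsRestriction.biUnion_convexHull_bdry {E : Type*} [AddCommGroup E] [Module ℝ E]
    {K : Geometry.SimplicialComplex ℝ E} {F A : Finset E} {L : List (Finset E)}
    (hA : IsRestriction F L A) (hl : IsShelling (n + 1) (F :: L))
    (hthin : IsThin (n + 1) {G | G ∈ F :: L})
    (hmem : ∀ G ∈ F :: L, G ∈ K.faces ∧ #G = n + 2) :
    ⋃ σ ∈ {σ | σ ∈ bdry (generatedByL K.faces (F :: L)) (n + 1) ∧ σ ⊆ F},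
        convexHull ℝ (σ : Set E) =
      ⋃ v ∈ F \ A, convexHull ℝ (F.erase v : Set E) := by
  have hlK : ∀ G ∈ F :: L, G ∈ K.faces := fun G hG => (hmem G hG).1
  have hcard : ∀ G ∈ F :: L, #G = n + 2 := fun G hG => (hmem G hG).2
  refine Set.Subset.antisymm (Set.iUnion₂_subset ?_) (Set.iUnion₂_subset fun v hv => ?_)
  · rintro σ ⟨hσ, hσF⟩
    obtain ⟨v, hv, hvσ⟩ := not_subset.1
      ((hA.hasNoFreeRidge hl hthin).not_subset_of_mem_bdry hlK hcard hσ)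
    exact Set.subset_biUnion_of_mem (u := fun v => convexHull ℝ (F.erase v : Set E)) hv |>.trans'
      (convexHull_mono (coe_subset.2 (subset_erase.2 ⟨hσF, hvσ⟩)))
  · have hFK := hlK F List.mem_cons_self
    have hne : (F.erase v).Nonempty := card_pos.1 <| by
      rw [card_erase_of_mem (mem_sdiff.1 hv).1, hcard F List.mem_cons_self]
      omega
    have hbdry := hA.erase_mem_bdry hFK hcard hv (K.down_closed hFK (erase_subset v F) hne)
    exact Set.subset_biUnion_of_mem (u := fun σ : Finset E => convexHull ℝ (σ : Set E))
      ⟨hbdry, erase_subset v F⟩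

theorem IsRestriction.nonempty_homeomorph_biUnion_convexHull_bdry {E H : Type*}
    [NormedAddCommGroup E] [NormedSpace ℝ E] [FiniteDimensional ℝ E] [NormedAddCommGroup H]
    [NormedSpace ℝ H] [FiniteDimensional ℝ H] {K : Geometry.SimplicialComplex ℝ E}
    {F A : Finset E} {L : List (Finset E)} (hA : IsRestriction F L A)
    (hl : IsShelling (n + 1) (F :: L)) (hthin : IsThin (n + 1) {G | G ∈ F :: L})
    (hmem : ∀ G ∈ F :: L, G ∈ K.faces ∧ #G = n + 2) (hn : Module.finrank ℝ H = n)
    (hAne : A.Nonempty) (hAF : A ⊂ F) :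
    Nonempty ((⋃ σ ∈ {σ | σ ∈ bdry (generatedByL K.faces (F :: L)) (n + 1) ∧ σ ⊆ F},
      convexHull ℝ (σ : Set E) : Set E) ≃ₜ Metric.closedBall (0 : H) 1) := by
  obtain ⟨hF, hcard⟩ := hmem F List.mem_cons_self
  rw [hA.biUnion_convexHull_bdry hl hthin hmem]
  exact nonempty_homeomorph_biUnion_convexHull_erase (K.indep hF) (by rw [hcard, hn])
    (sdiff_ssubset hA.subset hAne) (sdiff_nonempty.2 hAF.not_subset)

end ShellingDown

section TriangulatedBall

open Module Set Metric Geometry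

theorem exists_continuousOn_forall_eq {α β : Type*} [TopologicalSpace α] [TopologicalSpace β]
    [Nonempty β] {X : Set α} {φ : X → β} (hφ : Continuous φ) :
    ∃ f : α → β, ContinuousOn f X ∧ ∀ x : X, f x = φ x := by
  let f := Function.extend Subtype.val φ fun _ => Classical.arbitrary β
  have hf : ∀ x : X, f x = φ x := fun x => Subtype.val_injective.extend_apply φ _ x
  exact ⟨f, continuousOn_iff_continuous_domRestrict.2 (hφ.congr fun x => (hf x).symm), hf⟩

theorem exists_invOn_of_homeomorph {α β : Type*} [TopologicalSpace α] [TopologicalSpace β]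
    [Nonempty α] [Nonempty β] {X : Set α} {Y : Set β} (e : X ≃ₜ Y) :
    ∃ (f : α → β) (g : β → α), ContinuousOn f X ∧ ContinuousOn g Y ∧ MapsTo f X Y ∧ MapsTo g Y X ∧
      InvOn g f X Y := by
  obtain ⟨f, hf, hfe⟩ := exists_continuousOn_forall_eq (continuous_subtype_val.comp e.continuous)
  obtain ⟨g, hg, hge⟩ :=
    exists_continuousOn_forall_eq (continuous_subtype_val.comp e.symm.continuous)
  refine ⟨f, g, hf, hg, fun x hx => ?_, fun y hy => ?_, fun x hx => ?_, fun y hy => ?_⟩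
  · exact hfe ⟨x, hx⟩ ▸ (e ⟨x, hx⟩).2
  · exact hge ⟨y, hy⟩ ▸ (e.symm ⟨y, hy⟩).2
  · simpa [hge] using congrArg g (hfe ⟨x, hx⟩)
  · simpa [hfe] using congrArg f (hge ⟨y, hy⟩)

variable {E H : Type*} [NormedAddCommGroup E] [NormedSpace ℝ E] [NormedAddCommGroup H]
  [NormedSpace ℝ H] [FiniteDimensional ℝ H] [Nontrivial H] {K : SimplicialComplex ℝ E}

theorem isThin_of_homeomorph_closedBall (e : K.space ≃ₜ closedBall (0 : H) 1) :
    IsThin (finrank ℝ H) {F | F ∈ K.faces ∧ F.card = finrank ℝ H + 1} := by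
  obtain ⟨f, g, hf, -, -, -, hinv⟩ := exists_invOn_of_homeomorph e
  rintro σ hσ G₁ ⟨hG₁, hc₁⟩ G₂ ⟨hG₂, hc₂⟩ G₃ ⟨hG₃, hc₃⟩ hσG₁ hσG₂ hσG₃
  obtain ⟨a, ha, rfl⟩ := Finset.exists_eq_insert_iff.2 ⟨hσG₁, by rw [hσ, hc₁]⟩
  obtain ⟨b, hb, rfl⟩ := Finset.exists_eq_insert_iff.2 ⟨hσG₂, by rw [hσ, hc₂]⟩
  obtain ⟨c, hc, rfl⟩ := Finset.exists_eq_insert_iff.2 ⟨hσG₃, by rw [hσ, hc₃]⟩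
  rcases eq_or_ne a b with rfl | hab
  · exact .inl rfl
  · rcases eq_or_eq_of_insert_mem_faces hf hinv.1.injOn ha hb hc hab hσ hG₁ hG₂ hG₃ with rfl | rfl
    · exact .inr (.inl rfl)
    · exact .inr (.inr rfl)

theorem not_hasNoFreeRidge_of_homeomorph_closedBall [FiniteDimensional ℝ E]
    (e : K.space ≃ₜ closedBall (0 : H) 1) (hfin : K.faces.Finite)
    (hpure : PureDim K.faces (finrank ℝ H)) :
    ¬ HasNoFreeRidge (finrank ℝ H) ∅ {F | F ∈ K.faces ∧ F.card = finrank ℝ H + 1} := by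
  obtain ⟨f, g, hf, hg, hfmaps, hgmaps, hinv⟩ := exists_invOn_of_homeomorph e
  obtain ⟨F, hF, hcard, a, ha, hfree⟩ := exists_erase_forall_insert_notMem_faces hfin hf hg hfmaps
    hgmaps hinv fun σ hσ => by
      obtain ⟨F, hF, hσF⟩ := exists_isFacet_superset hfin hσ
      exact ⟨F, hF.1, hσF, hpure.2 F hF⟩
  have hridge : (F.erase a).card = finrank ℝ H := by
    rw [Finset.card_erase_of_mem ha, hcard, Nat.add_sub_cancel]
  intro hno
  obtain ⟨G, ⟨hG, hGcard⟩, hne, hsub⟩ := hno (F.erase a) hridge (Finset.empty_subset _) F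
    ⟨hF, hcard⟩ (Finset.erase_subset a F)
  obtain ⟨b, hb, rfl⟩ := Finset.exists_eq_insert_iff.2 ⟨hsub, by rw [hridge, hGcard]⟩
  refine hfree b (fun hbF => hne ?_) hG
  have hba : b = a := by
    by_contra hba
    exact hb (Finset.mem_erase.2 ⟨hba, hbF⟩)
  rw [hba, Finset.insert_erase ha]

end TriangulatedBall

/-- Lemma 5.5: each step of a shelling down of a triangulated `d`-ball to a
single `d`-simplex removes a face which is free for shelling. -/
theorem shellingDown_free {N d : ℕ}
    (B : Geometry.SimplicialComplex ℝ (EuclideanSpace ℝ (Fin N)))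
    (hfin : B.faces.Finite)
    (hball : IsBallSet d B.space)
    (hpure : PureDim B.faces d)
    (l : List (Finset (EuclideanSpace ℝ (Fin N))))
    (hdown : IsShellingDown B.faces d l (l.length - 1))
    (i : ℕ) (hi : i < l.length - 1) :
    IsBallSet (d - 1)
      (poly {σ | σ ∈ bdry (generatedByL B.faces (l.drop i)) d ∧ σ ⊆ l.getD i ∅}) := by
  obtain ⟨n, rfl⟩ := Nat.exists_eq_succ_of_ne_zero
    (hdown.dim_ne_zero hpure (fun _ => B.nonempty_of_mem_faces) hi)
  obtain ⟨e⟩ := hball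
  have hil : i < l.length := by omega
  have hfacets : {G | G ∈ l} = {G | G ∈ B.faces ∧ G.card = n + 2} :=
    Set.ext fun G => (hdown.2.1 G).trans (hpure.isFacet_iff hfin)
  have hl := hdown.isShelling hfin (fun _ hF _ => B.down_closed hF) hpure
  have hthin : IsThin (n + 1) {G | G ∈ l} := by
    simpa [hfacets] using isThin_of_homeomorph_closedBall e
  have hfree : ¬ HasNoFreeRidge (n + 1) ∅ {G | G ∈ l} := by
    simpa [hfacets] using not_hasNoFreeRidge_of_homeomorph_closedBall e hfin (by simpa using hpure)
  have hsuffix : l[i] :: l.drop (i + 1) <:+ l := List.drop_eq_getElem_cons hil ▸ l.drop_suffix i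
  have hmem : ∀ G ∈ l[i] :: l.drop (i + 1), G ∈ B.faces ∧ G.card = n + 2 :=
    fun G hG => hfacets.subset (hsuffix.mem hG)
  obtain ⟨A, hA⟩ := (hl _ _ hsuffix).2
  have hAne : A.Nonempty := hA.nonempty (List.drop_eq_nil_iff.not.2 (by omega))
  have hAF := hA.ssubset hl hthin hfree hsuffix
  rw [IsBallSet, poly, l.getD_eq_getElem _ hil, List.drop_eq_getElem_cons hil]
  exact hA.nonempty_homeomorph_biUnion_convexHull_bdry (hl.of_suffix hsuffix)
    (hthin.mono fun _ => hsuffix.mem) hmem finrank_euclideanSpace_fin hAne hAF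

end PaperFormal
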